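/- arXiv:1404.7593 — 13 statements merged into one kernel-verified Lean document; each statement's English description precedes it below -/
import Mathlib

section
/- Monotonicity of the iterated Riccati operator: Let P0¹ and P0² be symmetric n×n real matrices with P0¹ ≤ P0² in the Loewner order, and let k be a natural number. Suppose that for every i with 0 ≤ i ≤ k−1 and for j = 1,2 the matrix γ²·I − Bᵀ(R_i(P0ʲ))B is positive definite (so that R_k(P0¹) and R_k(P0²) are well defined). Then R_k(P0¹) ≤ R_k(P0²) in the Loewner order. -/
open Matrix

/-- The Riccati operator `R(P) = Φ + AᵀPA + AᵀPB(γ²I − BᵀPB)⁻¹BᵀPA`. -/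
noncomputable def Ric {n m : ℕ} (A : Matrix (Fin n) (Fin n) ℝ) (B : Matrix (Fin n) (Fin m) ℝ)
    (Φ : Matrix (Fin n) (Fin n) ℝ) (γ : ℝ) (P : Matrix (Fin n) (Fin n) ℝ) :
    Matrix (Fin n) (Fin n) ℝ :=
  Φ + Aᵀ * P * A +
    Aᵀ * P * B * (γ ^ 2 • (1 : Matrix (Fin m) (Fin m) ℝ) - Bᵀ * P * B)⁻¹ * Bᵀ * P * A

theorem ric_square {n m : ℕ} (A : Matrix (Fin n) (Fin n) ℝ) (B : Matrix (Fin n) (Fin m) ℝ)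
    (Φ : Matrix (Fin n) (Fin n) ℝ) (γ : ℝ) (P : Matrix (Fin n) (Fin n) ℝ) (hP : P.IsSymm)
    (S : Matrix (Fin m) (Fin m) ℝ)
    (hS : S = γ ^ 2 • (1 : Matrix (Fin m) (Fin m) ℝ) - Bᵀ * P * B) (hSp : S.PosDef)
    (L : Matrix (Fin m) (Fin n) ℝ) (hL : L = S⁻¹ * (Bᵀ * (P * A)))
    (K : Matrix (Fin m) (Fin n) ℝ) :
    Ric A B Φ γ P = Φ + (A + B * K)ᵀ * P * (A + B * K) - γ ^ 2 • (Kᵀ * K)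
      + (K - L)ᵀ * S * (K - L) := by
  have hu : IsUnit S.det := (Matrix.isUnit_iff_isUnit_det S).1 hSp.isUnit
  have hSs : Sᵀ = S := by
    have := hSp.isHermitian.eq
    rwa [Matrix.conjTranspose_eq_transpose_of_trivial] at this
  have e1 : S * L = Bᵀ * (P * A) := by
    rw [hL, Matrix.mul_nonsing_inv_cancel_left _ _ hu]
  have e2 : Lᵀ * S = Aᵀ * (P * B) := by
    have := congrArg Matrix.transpose e1
    simpa [Matrix.transpose_mul, hSs, hP.eq, Matrix.mul_assoc] using this
  have e3 : (K - L)ᵀ * S * (K - L) = Kᵀ * (S * K) - Kᵀ * (S * L) - Lᵀ * S * K + Lᵀ * S * L := by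
    simp only [Matrix.transpose_sub, Matrix.sub_mul, Matrix.mul_sub, Matrix.mul_assoc]
    abel
  have e4 : Kᵀ * (S * K) = γ ^ 2 • (Kᵀ * K) - Kᵀ * (Bᵀ * (P * (B * K))) := by
    rw [hS]
    simp [Matrix.sub_mul, Matrix.mul_sub, Matrix.mul_assoc]
  have e5 : Ric A B Φ γ P = Φ + Aᵀ * (P * A) + Aᵀ * (P * (B * L)) := by
    rw [Ric, ← hS, hL]
    simp only [Matrix.mul_assoc]
  rw [e3, e4, e1, e2, e5]
  simp only [Matrix.transpose_add, Matrix.transpose_mul, Matrix.add_mul, Matrix.mul_add,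
    Matrix.mul_assoc]
  abel

theorem ric_symm {n m : ℕ} (A : Matrix (Fin n) (Fin n) ℝ) (B : Matrix (Fin n) (Fin m) ℝ)
    (Φ : Matrix (Fin n) (Fin n) ℝ) (hΦ : Φ.IsSymm) (γ : ℝ) (P : Matrix (Fin n) (Fin n) ℝ)
    (hP : P.IsSymm) : (Ric A B Φ γ P).IsSymm := by
  unfold Matrix.IsSymm Ric
  simp [Matrix.transpose_mul, Matrix.transpose_nonsing_inv, hP.eq, hΦ.eq, Matrix.mul_assoc]

theorem ric_mono {n m : ℕ} (A : Matrix (Fin n) (Fin n) ℝ) (B : Matrix (Fin n) (Fin m) ℝ)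
    (Φ : Matrix (Fin n) (Fin n) ℝ) (γ : ℝ) (P Q : Matrix (Fin n) (Fin n) ℝ)
    (hP : P.IsSymm) (hQ : Q.IsSymm) (hle : (Q - P).PosSemidef)
    (h1 : (γ ^ 2 • (1 : Matrix (Fin m) (Fin m) ℝ) - Bᵀ * P * B).PosDef)
    (h2 : (γ ^ 2 • (1 : Matrix (Fin m) (Fin m) ℝ) - Bᵀ * Q * B).PosDef) :
    (Ric A B Φ γ Q - Ric A B Φ γ P).PosSemidef := by
  obtain ⟨K, hK⟩ : ∃ K, K = (γ ^ 2 • (1 : Matrix (Fin m) (Fin m) ℝ) - Bᵀ * P * B)⁻¹ *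
    (Bᵀ * (P * A)) := ⟨_, rfl⟩
  obtain ⟨L, hL⟩ : ∃ L, L = (γ ^ 2 • (1 : Matrix (Fin m) (Fin m) ℝ) - Bᵀ * Q * B)⁻¹ *
    (Bᵀ * (Q * A)) := ⟨_, rfl⟩
  have a := (hle.conjTranspose_mul_mul_same (A + B * K)).add
    (h2.posSemidef.conjTranspose_mul_mul_same (K - L))
  rw [ric_square A B Φ γ P hP _ rfl h1 K hK K, ric_square A B Φ γ Q hQ _ rfl h2 L hL K]
  simp only [Matrix.conjTranspose_eq_transpose_of_trivial] at a
  convert a using 1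
  rw [sub_self K, Matrix.mul_zero, Matrix.mul_sub _ Q P, Matrix.sub_mul _ _ (A + B * K)]
  abel

/-- Monotonicity of the iterated Riccati operator in the Loewner order. -/
theorem riccati_iterate_monotone {n m : ℕ}
    (A : Matrix (Fin n) (Fin n) ℝ) (B : Matrix (Fin n) (Fin m) ℝ)
    (Φ : Matrix (Fin n) (Fin n) ℝ) (hΦsymm : Φ.IsSymm) (hΦ : Φ.PosDef)
    (γ : ℝ) (hγ : 0 < γ)
    (P₁ P₂ : Matrix (Fin n) (Fin n) ℝ) (hP₁ : P₁.IsSymm) (hP₂ : P₂.IsSymm)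
    (hle : (P₂ - P₁).PosSemidef) (k : ℕ)
    (h1 : ∀ i < k,
      (γ ^ 2 • (1 : Matrix (Fin m) (Fin m) ℝ) - Bᵀ * ((Ric A B Φ γ)^[i] P₁) * B).PosDef)
    (h2 : ∀ i < k,
      (γ ^ 2 • (1 : Matrix (Fin m) (Fin m) ℝ) - Bᵀ * ((Ric A B Φ γ)^[i] P₂) * B).PosDef) :
    ((Ric A B Φ γ)^[k] P₂ - (Ric A B Φ γ)^[k] P₁).PosSemidef := by
  have s1 : ∀ i, ((Ric A B Φ γ)^[i] P₁).IsSymm := fun i => by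
    induction i with
    | zero => exact hP₁
    | succ i ih => rw [Function.iterate_succ_apply']; exact ric_symm A B Φ hΦsymm γ _ ih
  have s2 : ∀ i, ((Ric A B Φ γ)^[i] P₂).IsSymm := fun i => by
    induction i with
    | zero => exact hP₂
    | succ i ih => rw [Function.iterate_succ_apply']; exact ric_symm A B Φ hΦsymm γ _ ih
  induction k with
  | zero => exact hle
  | succ k ih =>
    rw [Function.iterate_succ_apply', Function.iterate_succ_apply']
    exact ric_mono A B Φ γ _ _ (s1 k) (s2 k)
      (ih (fun i hi => h1 i (by omega)) (fun i hi => h2 i (by omega)))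
      (h1 k (by omega)) (h2 k (by omega))
end

section
/- Invariance of the space of quadratics with Hessian above M (Theorem on the value function space): Let M be a symmetric n×n real matrix such that γ²·I − Bᵀ(R_k(M))B is positive definite for every k ≥ 0 and such that R(M) − M is positive definite. Let P0 be a symmetric n×n real matrix with P0 − M positive definite, let k ≥ 1, and suppose γ²·I − Bᵀ(R_i(P0))B is positive definite for every 0 ≤ i ≤ k−1 (so R_k(P0) is well defined). Then R_k(P0) − M is positive definite. -/
open Matrix

theorem Ric_key {n m : ℕ} (A : Matrix (Fin n) (Fin n) ℝ) (B : Matrix (Fin n) (Fin m) ℝ)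
    (Φ : Matrix (Fin n) (Fin n) ℝ) (γ : ℝ) (P : Matrix (Fin n) (Fin n) ℝ) (hP : Pᵀ = P)
    (S : Matrix (Fin m) (Fin m) ℝ)
    (hS : S = γ ^ 2 • (1 : Matrix (Fin m) (Fin m) ℝ) - Bᵀ * P * B) (hpd : S.PosDef)
    (K : Matrix (Fin m) (Fin n) ℝ) :
    Ric A B Φ γ P = Φ + (A + B * K)ᵀ * P * (A + B * K) - γ ^ 2 • (Kᵀ * K)
      + (K - S⁻¹ * Bᵀ * P * A)ᵀ * S * (K - S⁻¹ * Bᵀ * P * A) := by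
  have hu : IsUnit S.det := (Matrix.isUnit_iff_isUnit_det S).1 hpd.isUnit
  have hSt : Sᵀ = S := by simpa [Matrix.IsHermitian] using hpd.isHermitian
  have h1 : (S⁻¹ * Bᵀ * P * A)ᵀ = Aᵀ * P * B * S⁻¹ := by
    simp [Matrix.transpose_mul, Matrix.transpose_nonsing_inv, hSt, hP, Matrix.mul_assoc]
  have h2 : (K - S⁻¹ * Bᵀ * P * A)ᵀ * S * (K - S⁻¹ * Bᵀ * P * A)
      = Kᵀ * S * K - Kᵀ * Bᵀ * P * A - Aᵀ * P * B * K
        + Aᵀ * P * B * S⁻¹ * Bᵀ * P * A := by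
    have e1 : S * (S⁻¹ * Bᵀ * P * A) = Bᵀ * P * A := by
      simp only [← Matrix.mul_assoc, Matrix.mul_nonsing_inv _ hu, Matrix.one_mul]
    have e2 : (Aᵀ * P * B * S⁻¹) * S = Aᵀ * P * B := by
      rw [Matrix.mul_assoc, Matrix.nonsing_inv_mul _ hu, Matrix.mul_one]
    rw [Matrix.transpose_sub, h1, Matrix.sub_mul, e2, Matrix.sub_mul, Matrix.mul_sub,
      Matrix.mul_sub, Matrix.mul_assoc Kᵀ S (S⁻¹ * Bᵀ * P * A), e1]
    simp only [Matrix.mul_assoc]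
    abel
  have h3 : Kᵀ * S * K = γ ^ 2 • (Kᵀ * K) - Kᵀ * Bᵀ * P * B * K := by
    rw [hS]
    simp [Matrix.mul_sub, Matrix.sub_mul, Matrix.mul_assoc]
  rw [h2, h3]
  unfold Ric
  rw [← hS]
  simp only [Matrix.transpose_add, Matrix.transpose_mul, Matrix.add_mul, Matrix.mul_add,
    Matrix.mul_assoc]
  abel

theorem Ric_mono {n m : ℕ} (A : Matrix (Fin n) (Fin n) ℝ) (B : Matrix (Fin n) (Fin m) ℝ)
    (Φ : Matrix (Fin n) (Fin n) ℝ) (γ : ℝ) (P M : Matrix (Fin n) (Fin n) ℝ)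
    (hP : Pᵀ = P) (hM : Mᵀ = M)
    (hPS : (γ ^ 2 • (1 : Matrix (Fin m) (Fin m) ℝ) - Bᵀ * P * B).PosDef)
    (hMS : (γ ^ 2 • (1 : Matrix (Fin m) (Fin m) ℝ) - Bᵀ * M * B).PosDef)
    (h : (P - M).PosSemidef) : (Ric A B Φ γ P - Ric A B Φ γ M).PosSemidef := by
  obtain ⟨S, hS⟩ : ∃ S, S = γ ^ 2 • (1 : Matrix (Fin m) (Fin m) ℝ) - Bᵀ * P * B := ⟨_, rfl⟩
  obtain ⟨T, hT⟩ : ∃ T, T = γ ^ 2 • (1 : Matrix (Fin m) (Fin m) ℝ) - Bᵀ * M * B := ⟨_, rfl⟩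
  rw [← hS] at hPS
  rw [← hT] at hMS
  obtain ⟨K, hK⟩ : ∃ K, K = T⁻¹ * Bᵀ * M * A := ⟨_, rfl⟩
  have a := Ric_key A B Φ γ P hP S hS hPS K
  have b := Ric_key A B Φ γ M hM T hT hMS K
  rw [← hK, sub_self, Matrix.mul_zero, add_zero] at b
  have c : Ric A B Φ γ P - Ric A B Φ γ M = (A + B * K)ᵀ * (P - M) * (A + B * K)
      + (K - S⁻¹ * Bᵀ * P * A)ᵀ * S * (K - S⁻¹ * Bᵀ * P * A) := by
    rw [a, b, Matrix.mul_sub _ P M, Matrix.sub_mul (_ * P) (_ * M)]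
    abel
  rw [c]
  have d1 := h.conjTranspose_mul_mul_same (A + B * K)
  have d2 := hPS.posSemidef.conjTranspose_mul_mul_same (K - S⁻¹ * Bᵀ * P * A)
  rw [Matrix.conjTranspose_eq_transpose_of_trivial] at d1 d2
  exact d1.add d2

/-- Invariance of the class of quadratics with Hessian above `M`:
if `P₀ − M > 0` then `R_k(P₀) − M > 0`. -/
theorem riccati_iterate_above_M {n m : ℕ}
    (A : Matrix (Fin n) (Fin n) ℝ) (B : Matrix (Fin n) (Fin m) ℝ)
    (Φ : Matrix (Fin n) (Fin n) ℝ) (hΦsymm : Φ.IsSymm) (hΦ : Φ.PosDef)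
    (γ : ℝ) (hγ : 0 < γ)
    (M : Matrix (Fin n) (Fin n) ℝ) (hMsymm : M.IsSymm)
    (hM1 : ∀ k : ℕ,
      (γ ^ 2 • (1 : Matrix (Fin m) (Fin m) ℝ) - Bᵀ * ((Ric A B Φ γ)^[k] M) * B).PosDef)
    (hM2 : (Ric A B Φ γ M - M).PosDef)
    (P₀ : Matrix (Fin n) (Fin n) ℝ) (hP₀symm : P₀.IsSymm) (hP₀M : (P₀ - M).PosDef)
    (k : ℕ) (hk : 1 ≤ k)
    (hP₀ : ∀ i < k,
      (γ ^ 2 • (1 : Matrix (Fin m) (Fin m) ℝ) - Bᵀ * ((Ric A B Φ γ)^[i] P₀) * B).PosDef) :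
    ((Ric A B Φ γ)^[k] P₀ - M).PosDef := by
  clear hk
  induction k with
  | zero => simpa using hP₀M
  | succ k ih =>
    have ih' := ih (fun i hi => hP₀ i (by omega))
    have hs : ((Ric A B Φ γ)^[k] P₀)ᵀ = (Ric A B Φ γ)^[k] P₀ := by
      have h := ih'.isHermitian
      rw [Matrix.IsHermitian, Matrix.conjTranspose_eq_transpose_of_trivial,
        Matrix.transpose_sub, hMsymm.eq] at h
      exact sub_left_injective h
    have hm := Ric_mono A B Φ γ _ M hs hMsymm.eq (hP₀ k (by omega)) (by simpa using hM1 0)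
      ih'.posSemidef
    rw [Function.iterate_succ_apply']
    have := hM2.posSemidef_add hm
    simpa using this
end

section
/- One-step dynamic programming identity: Let P be a symmetric n×n real matrix such that γ²·I − BᵀPB is positive definite. Then for every x ∈ ℝⁿ, sup over w ∈ ℝ^m of { (1/2)xᵀΦx − (γ²/2)|w|² + (1/2)(Ax+Bw)ᵀP(Ax+Bw) } is attained and equals (1/2)xᵀ(R(P))x, where R(P) = Φ + AᵀPA + AᵀPB(γ²·I − BᵀPB)⁻¹BᵀPA. -/
open Matrix

/-- One-step dynamic programming identity: the supremum over `w` of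
`½xᵀΦx − (γ²/2)|w|² + ½(Ax+Bw)ᵀP(Ax+Bw)` is attained and equals `½xᵀR(P)x`. -/
theorem one_step_dynamic_programming {n m : ℕ}
    (A : Matrix (Fin n) (Fin n) ℝ) (B : Matrix (Fin n) (Fin m) ℝ)
    (Φ : Matrix (Fin n) (Fin n) ℝ) (hΦsymm : Φ.IsSymm) (hΦ : Φ.PosDef)
    (γ : ℝ) (hγ : 0 < γ)
    (P : Matrix (Fin n) (Fin n) ℝ) (hPsymm : P.IsSymm)
    (hpd : (γ ^ 2 • (1 : Matrix (Fin m) (Fin m) ℝ) - Bᵀ * P * B).PosDef)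
    (x : Fin n → ℝ) :
    IsGreatest
      (Set.range fun w : Fin m → ℝ =>
        (1 / 2) * (x ⬝ᵥ Φ *ᵥ x) - γ ^ 2 / 2 * (w ⬝ᵥ w) +
          (1 / 2) * ((A *ᵥ x + B *ᵥ w) ⬝ᵥ P *ᵥ (A *ᵥ x + B *ᵥ w)))
      ((1 / 2) * (x ⬝ᵥ (Ric A B Φ γ P) *ᵥ x)) := by
  classical
  set M : Matrix (Fin m) (Fin m) ℝ := γ ^ 2 • (1 : Matrix (Fin m) (Fin m) ℝ) - Bᵀ * P * B with hM
  have hsw : ∀ {k l : ℕ} (C : Matrix (Fin k) (Fin l) ℝ) (u : Fin k → ℝ) (v : Fin l → ℝ),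
      u ⬝ᵥ C *ᵥ v = v ⬝ᵥ Cᵀ *ᵥ u := by
    intro k l C u v
    rw [Matrix.dotProduct_mulVec, ← Matrix.mulVec_transpose, dotProduct_comm]
  have hPt : Pᵀ = P := hPsymm
  have hMt : Mᵀ = M := by
    simp [hM, Matrix.transpose_mul, hPt, Matrix.mul_assoc]
  have hdet : IsUnit M.det := (Matrix.isUnit_iff_isUnit_det M).1 hpd.isUnit
  set y := A *ᵥ x with hy
  set q := Bᵀ *ᵥ (P *ᵥ y) with hq
  set w₀ := M⁻¹ *ᵥ q with hw₀
  have hMw : M *ᵥ w₀ = q := by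
    rw [hw₀, Matrix.mulVec_mulVec, Matrix.mul_nonsing_inv M hdet, Matrix.one_mulVec]
  have hR : x ⬝ᵥ (Ric A B Φ γ P) *ᵥ x = x ⬝ᵥ Φ *ᵥ x + y ⬝ᵥ P *ᵥ y + q ⬝ᵥ w₀ := by
    have h1 : (Ric A B Φ γ P) *ᵥ x
        = Φ *ᵥ x + Aᵀ *ᵥ (P *ᵥ y) + Aᵀ *ᵥ (P *ᵥ (B *ᵥ w₀)) := by
      rw [Ric, ← hM]
      simp only [hw₀, hq, hy, Matrix.add_mulVec, Matrix.mulVec_mulVec, Matrix.mul_assoc]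
    rw [h1, dotProduct_add, dotProduct_add, hsw Aᵀ x, hsw Aᵀ x, Matrix.transpose_transpose, ← hy,
      dotProduct_comm _ y, dotProduct_comm _ y, hsw P y (B *ᵥ w₀), hPt, dotProduct_comm (B *ᵥ w₀),
      hsw B, dotProduct_comm w₀]
  have key : ∀ w : Fin m → ℝ,
      (1 / 2) * (x ⬝ᵥ Φ *ᵥ x) - γ ^ 2 / 2 * (w ⬝ᵥ w) +
          (1 / 2) * ((y + B *ᵥ w) ⬝ᵥ P *ᵥ (y + B *ᵥ w))
      = (1 / 2) * (x ⬝ᵥ (Ric A B Φ γ P) *ᵥ x) - (1 / 2) * ((w - w₀) ⬝ᵥ M *ᵥ (w - w₀)) := by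
    intro w
    have e1 : w ⬝ᵥ M *ᵥ w = γ ^ 2 * (w ⬝ᵥ w) - (B *ᵥ w) ⬝ᵥ P *ᵥ (B *ᵥ w) := by
      rw [dotProduct_comm (B *ᵥ w), hsw B, hM, Matrix.sub_mulVec, dotProduct_sub,
        Matrix.smul_mulVec, Matrix.one_mulVec, dotProduct_smul, smul_eq_mul]
      simp only [Matrix.mulVec_mulVec, Matrix.mul_assoc]
    have e2 : w₀ ⬝ᵥ M *ᵥ w = w ⬝ᵥ q := by rw [hsw, hMt, hMw]
    have e3 : (B *ᵥ w) ⬝ᵥ P *ᵥ y = w ⬝ᵥ q := by rw [dotProduct_comm, hsw B]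
    have e4 : y ⬝ᵥ P *ᵥ (B *ᵥ w) = w ⬝ᵥ q := by rw [hsw P, hPt, e3]
    rw [hR]
    simp only [Matrix.mulVec_add, Matrix.mulVec_sub, dotProduct_add, add_dotProduct,
      dotProduct_sub, sub_dotProduct, hMw, e1, e2, e3, e4]
    rw [dotProduct_comm q w₀]
    ring
  constructor
  · refine ⟨w₀, ?_⟩
    simp only [key]
    simp
  · rintro _ ⟨w, rfl⟩
    simp only [key]
    have h := hpd.posSemidef.dotProduct_mulVec_nonneg (w - w₀)
    simp only [star_trivial] at h
    linarith
end

section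
/- Inversion of the max-plus duality transform: Let M be a symmetric invertible n×n real matrix, let φ : ℝⁿ → ℝ be such that x ↦ φ(x) − (1/2)xᵀMx is convex on ℝⁿ, and suppose that for every z ∈ ℝⁿ the quantity (D_ψφ)(z) := −sup_{x∈ℝⁿ} { (1/2)(x−z)ᵀM(x−z) − φ(x) } is finite. Then for every x ∈ ℝⁿ, sup_{z∈ℝⁿ} { (1/2)(x−z)ᵀM(x−z) + (D_ψφ)(z) } = φ(x). -/
open Matrix

/-- Inversion of the max-plus duality transform: for `M` symmetric invertible and
`φ − ½⟨·,M·⟩` convex, with `(D_ψφ)(z) = −sup_x {½(x−z)ᵀM(x−z) − φ(x)}` finite for all `z`,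
one has `sup_z {½(x−z)ᵀM(x−z) + (D_ψφ)(z)} = φ(x)` for every `x`. -/
theorem maxplus_dual_inversion {n : ℕ}
    (M : Matrix (Fin n) (Fin n) ℝ) (hMsymm : M.IsSymm) (hMinv : IsUnit M)
    (φ : (Fin n → ℝ) → ℝ)
    (hconv : ConvexOn ℝ Set.univ fun x => φ x - (1 / 2) * (x ⬝ᵥ M *ᵥ x))
    (hbdd : ∀ z : Fin n → ℝ,
      BddAbove (Set.range fun x : Fin n → ℝ =>
        (1 / 2) * ((x - z) ⬝ᵥ M *ᵥ (x - z)) - φ x))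
    (x : Fin n → ℝ) :
    IsLUB
      (Set.range fun z : Fin n → ℝ =>
        (1 / 2) * ((x - z) ⬝ᵥ M *ᵥ (x - z)) +
          (-(⨆ x' : Fin n → ℝ, (1 / 2) * ((x' - z) ⬝ᵥ M *ᵥ (x' - z)) - φ x')))
      (φ x) := by
  have key : ∀ y z : Fin n → ℝ, (1 / 2 : ℝ) * ((y - z) ⬝ᵥ M *ᵥ (y - z)) =
      (1 / 2) * (y ⬝ᵥ M *ᵥ y) - (M *ᵥ z) ⬝ᵥ y + (1 / 2) * (z ⬝ᵥ M *ᵥ z) := by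
    intro y z
    have h1 : z ⬝ᵥ M *ᵥ y = (M *ᵥ z) ⬝ᵥ y := by
      rw [dotProduct_mulVec, ← mulVec_transpose, hMsymm.eq]
    have h2 : y ⬝ᵥ M *ᵥ z = (M *ᵥ z) ⬝ᵥ y := dotProduct_comm _ _
    rw [mulVec_sub, sub_dotProduct, dotProduct_sub, dotProduct_sub, h1, h2]
    ring
  constructor
  · rintro _ ⟨z, rfl⟩
    have := le_ciSup (hbdd z) x
    dsimp only at this ⊢
    linarith
  · intro b hb
    refine le_of_forall_lt fun a ha => ?_
    obtain ⟨a', haa', ha'⟩ := exists_between ha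
    refine lt_of_lt_of_le haa' ?_
    obtain ⟨l, c, hl, hlx⟩ := hconv.exists_affine_le_of_lt (𝕜 := ℝ) (Set.mem_univ x)
      (a := a' - (1 / 2) * (x ⬝ᵥ M *ᵥ x)) (by linarith) isClosed_univ
      (hconv.continuousOn isOpen_univ).lowerSemicontinuousOn
    have hl' : ∀ y, l y + c ≤ φ y - (1 / 2) * (y ⬝ᵥ M *ᵥ y) := fun y => by
      simpa using hl ⟨y, Set.mem_univ y⟩
    have hlx' : l x + c = a' - (1 / 2) * (x ⬝ᵥ M *ᵥ x) := by simpa using hlx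
    obtain ⟨v, hv⟩ := (dotProductEquiv ℝ (Fin n)).surjective (l : (Fin n → ℝ) →ₗ[ℝ] ℝ)
    have hv' : ∀ y, v ⬝ᵥ y = l y := fun y => by
      simpa using congrArg (fun f => f y) hv
    obtain ⟨z, hz⟩ : ∃ z, M *ᵥ z = -v :=
      (mulVec_surjective_iff_isUnit.2 hMinv) (-v)
    refine le_trans ?_ (hb ⟨z, rfl⟩)
    have hs : (⨆ x' : Fin n → ℝ, (1 / 2) * ((x' - z) ⬝ᵥ M *ᵥ (x' - z)) - φ x') ≤
        (1 / 2) * (z ⬝ᵥ M *ᵥ z) - c := by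
      refine ciSup_le fun y => ?_
      rw [key, hz, neg_dotProduct, hv']
      linarith [hl' y]
    dsimp only
    have e : (M *ᵥ z) ⬝ᵥ x = - l x := by rw [hz, neg_dotProduct, hv']
    rw [key x z, e]
    linarith
end

section
/- Dual of a quadratic (Theorem characterizing ran(D_ψ)): Let M and Ω be symmetric n×n real matrices with Ω − M positive definite. Then for every z ∈ ℝⁿ, −sup_{x∈ℝⁿ} { (1/2)(x−z)ᵀM(x−z) − (1/2)xᵀΩx } = (1/2)zᵀ( M(M−Ω)⁻¹M − M )z; in particular the supremum is finite and the max-plus dual of the quadratic x ↦ (1/2)xᵀΩx is the quadratic z ↦ (1/2)zᵀΥ(Ω)z with Υ(Ω) = M(M−Ω)⁻¹M − M. -/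
open Matrix

/-- Dual of a quadratic: for `Ω − M` positive definite,
`sup_x {½(x−z)ᵀM(x−z) − ½xᵀΩx}` is finite with value `−½zᵀ(M(M−Ω)⁻¹M − M)z`,
i.e. the max-plus dual of `½xᵀΩx` is `½zᵀΥ(Ω)z` with `Υ(Ω) = M(M−Ω)⁻¹M − M`. -/
theorem maxplus_dual_of_quadratic {n : ℕ}
    (M Ω : Matrix (Fin n) (Fin n) ℝ) (hMsymm : M.IsSymm) (hΩsymm : Ω.IsSymm)
    (hΩM : (Ω - M).PosDef) (z : Fin n → ℝ) :
    IsLUB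
      (Set.range fun x : Fin n → ℝ =>
        (1 / 2) * ((x - z) ⬝ᵥ M *ᵥ (x - z)) - (1 / 2) * (x ⬝ᵥ Ω *ᵥ x))
      (-((1 / 2) * (z ⬝ᵥ (M * (M - Ω)⁻¹ * M - M) *ᵥ z))) := by
  have hdet : IsUnit (M - Ω).det := by
    have h1 : IsUnit (Ω - M) := hΩM.isUnit
    have h2 : IsUnit (M - Ω) := by
      rw [← neg_sub Ω M]; exact h1.neg
    exact (Matrix.isUnit_iff_isUnit_det _).1 h2
  obtain ⟨w, hw⟩ : ∃ w, w = (M - Ω)⁻¹ *ᵥ (M *ᵥ z) := ⟨_, rfl⟩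
  have hMw : M *ᵥ w - Ω *ᵥ w = M *ᵥ z := by
    rw [← Matrix.sub_mulVec, hw, Matrix.mulVec_mulVec, Matrix.mul_nonsing_inv _ hdet,
      Matrix.one_mulVec]
  have hsym : ∀ A : Matrix (Fin n) (Fin n) ℝ, A.IsSymm → ∀ a b : Fin n → ℝ,
      a ⬝ᵥ A *ᵥ b = b ⬝ᵥ A *ᵥ a := by
    intro A hA a b
    rw [Matrix.dotProduct_mulVec, ← Matrix.mulVec_transpose, hA.eq, dotProduct_comm]
  have hval : z ⬝ᵥ (M * (M - Ω)⁻¹ * M - M) *ᵥ z = z ⬝ᵥ M *ᵥ w - z ⬝ᵥ M *ᵥ z := by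
    rw [Matrix.sub_mulVec, dotProduct_sub, hw, Matrix.mulVec_mulVec, Matrix.mulVec_mulVec,
      Matrix.mul_assoc]
  have key : ∀ x : Fin n → ℝ,
      (1 / 2) * ((x - z) ⬝ᵥ M *ᵥ (x - z)) - (1 / 2) * (x ⬝ᵥ Ω *ᵥ x) =
      -((1 / 2) * (z ⬝ᵥ (M * (M - Ω)⁻¹ * M - M) *ᵥ z))
        - (1 / 2) * ((x - w) ⬝ᵥ (Ω - M) *ᵥ (x - w)) := by
    intro x
    have e1 := congrArg (fun v => x ⬝ᵥ v) hMw
    have e2 := congrArg (fun v => w ⬝ᵥ v) hMw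
    have e3 := hsym M hMsymm z x
    have e4 := hsym M hMsymm z w
    have e5 := hsym M hMsymm w x
    have e6 := hsym Ω hΩsymm w x
    rw [hval]
    simp only [Matrix.sub_mulVec, Matrix.mulVec_sub, dotProduct_sub, sub_dotProduct] at *
    linarith
  refine IsGreatest.isLUB ⟨⟨w, ?_⟩, ?_⟩
  · have := key w
    simpa using this
  · rintro _ ⟨x, rfl⟩
    have h := hΩM.posSemidef.dotProduct_mulVec_nonneg (x - w)
    simp only [star_trivial] at h
    have := key x
    simp only
    linarith
end

section
/- Inverse dual of a quadratic (Corollary on the duality between the primal and dual quadratic classes): Let M and Λ be symmetric n×n real matrices with M + Λ negative definite. Then for every x ∈ ℝⁿ, sup_{z∈ℝⁿ} { (1/2)(x−z)ᵀM(x−z) + (1/2)zᵀΛz } = (1/2)xᵀ( M − M(M+Λ)⁻¹M )x; in particular the supremum is finite and the inverse max-plus dual of the quadratic z ↦ (1/2)zᵀΛz is the quadratic x ↦ (1/2)xᵀΥ⁻¹(Λ)x with Υ⁻¹(Λ) = −M(M+Λ)⁻¹M + M. -/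
open Matrix

/-- Inverse dual of a quadratic: for `M + Λ` negative definite,
`sup_z {½(x−z)ᵀM(x−z) + ½zᵀΛz}` is finite with value `½xᵀ(M − M(M+Λ)⁻¹M)x`,
i.e. the inverse max-plus dual of `½zᵀΛz` is `½xᵀΥ⁻¹(Λ)x` with
`Υ⁻¹(Λ) = −M(M+Λ)⁻¹M + M`. -/
theorem maxplus_inverse_dual_of_quadratic {n : ℕ}
    (M Λ : Matrix (Fin n) (Fin n) ℝ) (hMsymm : M.IsSymm) (hΛsymm : Λ.IsSymm)
    (hMΛ : (-(M + Λ)).PosDef) (x : Fin n → ℝ) :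
    IsLUB
      (Set.range fun z : Fin n → ℝ =>
        (1 / 2) * ((x - z) ⬝ᵥ M *ᵥ (x - z)) + (1 / 2) * (z ⬝ᵥ Λ *ᵥ z))
      ((1 / 2) * (x ⬝ᵥ (M - M * (M + Λ)⁻¹ * M) *ᵥ x)) := by
  have hdet : IsUnit (M + Λ).det := by
    have h := hMΛ.isUnit
    rw [IsUnit.neg_iff] at h
    exact (Matrix.isUnit_iff_isUnit_det _).1 h
  have comm : ∀ A : Matrix (Fin n) (Fin n) ℝ, A.IsSymm → ∀ a b : Fin n → ℝ,
      a ⬝ᵥ A *ᵥ b = b ⬝ᵥ A *ᵥ a := by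
    intro A hA a b
    rw [Matrix.dotProduct_mulVec, ← Matrix.mulVec_transpose, hA.eq, dotProduct_comm]
  obtain ⟨w, hw⟩ : ∃ w, w = (M + Λ)⁻¹ *ᵥ (M *ᵥ x) := ⟨_, rfl⟩
  have hSw : M *ᵥ w + Λ *ᵥ w = M *ᵥ x := by
    rw [← Matrix.add_mulVec, hw, Matrix.mulVec_mulVec, Matrix.mul_nonsing_inv _ hdet,
      Matrix.one_mulVec]
  have hval : x ⬝ᵥ (M - M * (M + Λ)⁻¹ * M) *ᵥ x = x ⬝ᵥ M *ᵥ x - x ⬝ᵥ M *ᵥ w := by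
    rw [Matrix.sub_mulVec, dotProduct_sub, hw, Matrix.mulVec_mulVec, Matrix.mulVec_mulVec,
      Matrix.mul_assoc]
  have key : ∀ z : Fin n → ℝ,
      (1 / 2) * ((x - z) ⬝ᵥ M *ᵥ (x - z)) + (1 / 2) * (z ⬝ᵥ Λ *ᵥ z)
      = (1 / 2) * (x ⬝ᵥ (M - M * (M + Λ)⁻¹ * M) *ᵥ x)
        - (1 / 2) * ((z - w) ⬝ᵥ (-(M + Λ)) *ᵥ (z - w)) := by
    intro z
    have e1 : z ⬝ᵥ M *ᵥ w + z ⬝ᵥ Λ *ᵥ w = z ⬝ᵥ M *ᵥ x := by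
      rw [← dotProduct_add, hSw]
    have e2 : w ⬝ᵥ M *ᵥ w + w ⬝ᵥ Λ *ᵥ w = w ⬝ᵥ M *ᵥ x := by
      rw [← dotProduct_add, hSw]
    rw [hval]
    simp only [Matrix.neg_mulVec, Matrix.add_mulVec, Matrix.mulVec_sub, dotProduct_sub,
      sub_dotProduct, dotProduct_neg, dotProduct_add]
    linarith [comm M hMsymm x z, comm M hMsymm x w, comm M hMsymm z w, comm Λ hΛsymm z w]
  constructor
  · rintro _ ⟨z, rfl⟩
    have h := hMΛ.posSemidef.dotProduct_mulVec_nonneg (z - w)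
    simp only [star_trivial] at h
    have := key z
    dsimp only
    linarith
  · intro b hb
    have h := hb ⟨w, rfl⟩
    have k := key w
    simp only [sub_self w, zero_dotProduct, mul_zero, sub_zero] at k
    dsimp only at h
    linarith
end

section
/- Kernel representation of the dynamic programming evolution operator (Theorem that S_k equals the max-plus integral operator with kernel S_k): Assume M is a symmetric n×n real matrix satisfying: γ²·I − Bᵀ(R_k(M))B is positive definite for all k ≥ 0, R(M) − M is positive definite, and MB(γ²·I − BᵀMB)⁻¹BᵀM is positive definite. Fix k ≥ 1 and suppose the auxiliary value function Ŝ_k(x,z) := (S_k ψ(·,z))(x) is finite for all x,z ∈ ℝⁿ and has the quadratic form Ŝ_k(x,z) = (1/2)[x;z]ᵀQ_k[x;z] for a symmetric 2n×2n matrix Q_k whose lower-right n×n block Q_k²² satisfies Q_k²² − M positive definite. Define the primal kernel S_k(x,y) := −sup_{z∈ℝⁿ} { (1/2)(z−y)ᵀM(z−y) − Ŝ_k(x,z) }. Let P0 be a symmetric n×n matrix with P0 − M positive definite and γ²·I − Bᵀ(R_i(P0))B positive definite for all 0 ≤ i ≤ k−1, and let φ(x) = (1/2)xᵀP0x. Then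 for every x ∈ ℝⁿ, (S_kφ)(x) = sup_{y∈ℝⁿ} { S_k(x,y) + φ(y) }. -/
open Matrix

/-- The one-step dynamic programming evolution operator, acting on extended-real-valued
functions so that finiteness of the resulting value functions is a meaningful property:
`(Sφ)(x) = sup_w {½xᵀΦx − (γ²/2)|w|² + φ(Ax+Bw)}`. -/
noncomputable def DP {n m : ℕ} (A : Matrix (Fin n) (Fin n) ℝ) (B : Matrix (Fin n) (Fin m) ℝ)
    (Φ : Matrix (Fin n) (Fin n) ℝ) (γ : ℝ) (φ : (Fin n → ℝ) → EReal) :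
    (Fin n → ℝ) → EReal :=
  fun x => ⨆ w : Fin m → ℝ,
    (((1 / 2) * (x ⬝ᵥ Φ *ᵥ x) - γ ^ 2 / 2 * (w ⬝ᵥ w) : ℝ) : EReal) + φ (A *ᵥ x + B *ᵥ w)

/-- The primal-space kernel `S_k(x,y) = −sup_z {½(z−y)ᵀM(z−y) − Ŝ_k(x,z)}`, expressed
using the quadratic form `Ŝ_k(x,z) = ½[x;z]ᵀQ_k[x;z]` of the auxiliary value function. -/
noncomputable def primalKernel {n : ℕ} (M : Matrix (Fin n) (Fin n) ℝ)
    (Q : Matrix (Fin n ⊕ Fin n) (Fin n ⊕ Fin n) ℝ) (x y : Fin n → ℝ) : ℝ :=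
  -(⨆ z : Fin n → ℝ,
      (1 / 2) * ((z - y) ⬝ᵥ M *ᵥ (z - y)) -
        (1 / 2) * (Sum.elim x z ⬝ᵥ Q *ᵥ Sum.elim x z))

theorem aux_symm {n : ℕ} {M : Matrix (Fin n) (Fin n) ℝ} (h : M.IsSymm) (u v : Fin n → ℝ) :
    u ⬝ᵥ M *ᵥ v = v ⬝ᵥ M *ᵥ u := by
  rw [dotProduct_mulVec, ← mulVec_transpose, h.eq, dotProduct_comm]

theorem aux_pd {n : ℕ} {G : Matrix (Fin n) (Fin n) ℝ} (h : G.PosDef) (u : Fin n → ℝ) :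
    0 ≤ u ⬝ᵥ G *ᵥ u := by
  have := h.posSemidef.dotProduct_mulVec_nonneg u
  simpa using this

theorem aux_max {n : ℕ} {M H : Matrix (Fin n) (Fin n) ℝ} (hM : M.IsSymm) (hH : H.IsSymm)
    (hHM : (H - M).PosDef) (b : Fin n → ℝ) (c : ℝ) (f : (Fin n → ℝ) → ℝ)
    (hf : ∀ z, f z = 1 / 2 * (z ⬝ᵥ H *ᵥ z) + z ⬝ᵥ b + c) (y z : Fin n → ℝ)
    (hz : M *ᵥ (z - y) = H *ᵥ z + b) (z' : Fin n → ℝ) :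
    (1 / 2) * ((z' - y) ⬝ᵥ M *ᵥ (z' - y)) - f z' ≤
      (1 / 2) * ((z - y) ⬝ᵥ M *ᵥ (z - y)) - f z := by
  obtain ⟨d, rfl⟩ : ∃ d, z' = z + d := ⟨z' - z, by simp⟩
  have h0 := aux_pd hHM d
  have h1 : z + d - y = (z - y) + d := by abel
  have h2 : d ⬝ᵥ M *ᵥ (z - y) = d ⬝ᵥ (H *ᵥ z) + d ⬝ᵥ b := by rw [hz, dotProduct_add]
  have h3 := aux_symm hM d (z - y)
  have h4 := aux_symm hH d z
  rw [hf, hf, h1]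
  generalize z - y = e at *
  simp only [mulVec_add, add_dotProduct, dotProduct_add, sub_mulVec, dotProduct_sub] at *
  linarith

theorem aux_dual {n : ℕ} {M H : Matrix (Fin n) (Fin n) ℝ} (hM : M.IsSymm) (hH : H.IsSymm)
    (hMu : IsUnit M.det)
    (hHM : (H - M).PosDef) (b : Fin n → ℝ) (c : ℝ) (f : (Fin n → ℝ) → ℝ)
    (hf : ∀ z, f z = 1 / 2 * (z ⬝ᵥ H *ᵥ z) + z ⬝ᵥ b + c) (K : (Fin n → ℝ) → ℝ)
    (hK : ∀ y, K y = -(⨆ z : Fin n → ℝ, (1 / 2) * ((z - y) ⬝ᵥ M *ᵥ (z - y)) - f z)) :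
    (∀ y z, K y + (1 / 2) * ((z - y) ⬝ᵥ M *ᵥ (z - y)) ≤ f z) ∧
    (∀ z, ∃ y, K y + (1 / 2) * ((z - y) ⬝ᵥ M *ᵥ (z - y)) = f z) := by
  have key : ∀ y z, K y + (1 / 2) * ((z - y) ⬝ᵥ M *ᵥ (z - y)) ≤ f z := by
    intro y z
    have hu : IsUnit (H - M).det := hHM.det_pos.ne'.isUnit
    set z0 := (H - M)⁻¹ *ᵥ (-(M *ᵥ y) - b) with hz0
    have h1 : (H - M) *ᵥ z0 = -(M *ᵥ y) - b := by
      rw [hz0, mulVec_mulVec, mul_nonsing_inv _ hu, one_mulVec]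
    have h2 : M *ᵥ (z0 - y) = H *ᵥ z0 + b := by
      rw [mulVec_sub]
      rw [sub_mulVec] at h1
      have : H *ᵥ z0 = M *ᵥ z0 + (-(M *ᵥ y) - b) := by rw [← h1]; abel
      rw [this]; abel
    have hb : BddAbove (Set.range fun z : Fin n → ℝ =>
        (1 / 2) * ((z - y) ⬝ᵥ M *ᵥ (z - y)) - f z) := by
      refine ⟨(1 / 2) * ((z0 - y) ⬝ᵥ M *ᵥ (z0 - y)) - f z0, ?_⟩
      · rintro _ ⟨z', rfl⟩
        exact aux_max hM hH hHM b c f hf y z0 h2 z'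
    have := le_ciSup hb z
    rw [hK]
    linarith
  refine ⟨key, fun z => ?_⟩
  refine ⟨z - M⁻¹ *ᵥ (H *ᵥ z + b), le_antisymm (key _ _) ?_⟩
  set y := z - M⁻¹ *ᵥ (H *ᵥ z + b) with hy
  have h2 : M *ᵥ (z - y) = H *ᵥ z + b := by
    rw [hy, sub_sub_cancel, mulVec_mulVec, mul_nonsing_inv _ hMu, one_mulVec]
  have := ciSup_le (aux_max hM hH hHM b c f hf y z h2)
  rw [hK]
  linarith

theorem aux_add_iSup {ι : Sort*} (c : ℝ) (f : ι → EReal) :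
    (c : EReal) + ⨆ i, f i = ⨆ i, ((c : EReal) + f i) := by
  apply le_antisymm
  · rw [add_comm]
    rw [← EReal.le_sub_iff_add_le (by simp) (by simp)]
    refine iSup_le fun i => ?_
    rw [EReal.le_sub_iff_add_le (by simp) (by simp), add_comm]
    exact le_iSup (fun i => (c : EReal) + f i) i
  · exact iSup_le fun i => add_le_add le_rfl (le_iSup f i)

theorem aux_DP_lin {n m : ℕ} (A : Matrix (Fin n) (Fin n) ℝ) (B : Matrix (Fin n) (Fin m) ℝ)
    (Φ : Matrix (Fin n) (Fin n) ℝ) (γ : ℝ) {ι : Type*} (a : ι → ℝ)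
    (f : ι → (Fin n → ℝ) → EReal) (k : ℕ) :
    (DP A B Φ γ)^[k] (fun x => ⨆ z, ((a z : EReal) + f z x)) =
      fun x => ⨆ z, ((a z : EReal) + (DP A B Φ γ)^[k] (f z) x) := by
  induction k generalizing f with
  | zero => rfl
  | succ k ih =>
    rw [Function.iterate_succ_apply]
    have : DP A B Φ γ (fun x => ⨆ z, ((a z : EReal) + f z x)) =
        fun x => ⨆ z, ((a z : EReal) + DP A B Φ γ (f z) x) := by
      funext x
      simp only [DP, aux_add_iSup]
      rw [iSup_comm]
      refine iSup_congr fun z => iSup_congr fun w => ?_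
      rw [add_left_comm]
    rw [this, ih]
    rfl

theorem aux_DP_mono {n m : ℕ} (A : Matrix (Fin n) (Fin n) ℝ) (B : Matrix (Fin n) (Fin m) ℝ)
    (Φ : Matrix (Fin n) (Fin n) ℝ) (γ : ℝ) : Monotone (DP A B Φ γ) := by
  intro f g h x
  exact iSup_mono fun w => add_le_add le_rfl (h _)

theorem aux_sq {m : ℕ} {G : Matrix (Fin m) (Fin m) ℝ} (h : G.PosDef) (hs : G.IsSymm)
    (v w : Fin m → ℝ) :
    w ⬝ᵥ v - 1 / 2 * (w ⬝ᵥ G *ᵥ w) ≤ 1 / 2 * (v ⬝ᵥ G⁻¹ *ᵥ v) := by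
  have hu : IsUnit G.det := h.det_pos.ne'.isUnit
  obtain ⟨e, rfl⟩ : ∃ e, v = G *ᵥ e := ⟨G⁻¹ *ᵥ v, by
    rw [mulVec_mulVec, mul_nonsing_inv _ hu, one_mulVec]⟩
  rw [mulVec_mulVec, nonsing_inv_mul _ hu, one_mulVec]
  have h0 := aux_pd h (w - e)
  have h1 := aux_symm hs w e
  have h2 := dotProduct_comm (G *ᵥ e) e
  simp only [mulVec_sub, sub_dotProduct, dotProduct_sub] at h0
  linarith

theorem aux_G_symm {n m : ℕ} (B : Matrix (Fin n) (Fin m) ℝ) (γ : ℝ)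
    {P : Matrix (Fin n) (Fin n) ℝ} (hP : P.IsSymm) :
    (γ ^ 2 • (1 : Matrix (Fin m) (Fin m) ℝ) - Bᵀ * P * B).IsSymm := by
  simp [Matrix.IsSymm, transpose_mul, hP.eq, Matrix.mul_assoc]

theorem aux_Ric_symm {n m : ℕ} (A : Matrix (Fin n) (Fin n) ℝ) (B : Matrix (Fin n) (Fin m) ℝ)
    {Φ : Matrix (Fin n) (Fin n) ℝ} (hΦ : Φ.IsSymm) (γ : ℝ)
    {P : Matrix (Fin n) (Fin n) ℝ} (hP : P.IsSymm) : (Ric A B Φ γ P).IsSymm := by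
  have h := (aux_G_symm B γ hP).eq
  unfold Ric
  generalize (γ ^ 2 • (1 : Matrix (Fin m) (Fin m) ℝ) - Bᵀ * P * B) = G at *
  simp [Matrix.IsSymm, transpose_mul, hP.eq, hΦ.eq, Matrix.mul_assoc, transpose_nonsing_inv, h]

theorem aux_step {n m : ℕ} (A : Matrix (Fin n) (Fin n) ℝ) (B : Matrix (Fin n) (Fin m) ℝ)
    (Φ : Matrix (Fin n) (Fin n) ℝ) (γ : ℝ)
    {P : Matrix (Fin n) (Fin n) ℝ} (hP : P.IsSymm)
    (hG : (γ ^ 2 • (1 : Matrix (Fin m) (Fin m) ℝ) - Bᵀ * P * B).PosDef) :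
    DP A B Φ γ (fun y => (((1 / 2) * (y ⬝ᵥ P *ᵥ y) : ℝ) : EReal)) ≤
      fun y => (((1 / 2) * (y ⬝ᵥ Ric A B Φ γ P *ᵥ y) : ℝ) : EReal) := by
  intro x
  refine iSup_le fun w => ?_
  rw [← EReal.coe_add, EReal.coe_le_coe_iff]
  have h := aux_sq hG (aux_G_symm B γ hP) (Bᵀ *ᵥ (P *ᵥ (A *ᵥ x))) w
  have t : ∀ {p q : ℕ} (C : Matrix (Fin p) (Fin q) ℝ) (u : Fin q → ℝ) (v : Fin p → ℝ),
      u ⬝ᵥ (Cᵀ *ᵥ v) = (C *ᵥ u) ⬝ᵥ v := by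
    intro p q C u v
    rw [mulVec_transpose, ← dotProduct_comm, ← dotProduct_mulVec, dotProduct_comm]
  have e1 : x ⬝ᵥ Ric A B Φ γ P *ᵥ x = x ⬝ᵥ Φ *ᵥ x + (A *ᵥ x) ⬝ᵥ P *ᵥ (A *ᵥ x) +
      (Bᵀ *ᵥ (P *ᵥ (A *ᵥ x))) ⬝ᵥ
        ((γ ^ 2 • (1 : Matrix (Fin m) (Fin m) ℝ) - Bᵀ * P * B)⁻¹ *ᵥ
          (Bᵀ *ᵥ (P *ᵥ (A *ᵥ x)))) := by
    unfold Ric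
    generalize (γ ^ 2 • (1 : Matrix (Fin m) (Fin m) ℝ) - Bᵀ * P * B)⁻¹ = G
    simp only [add_mulVec, dotProduct_add, ← mulVec_mulVec, t]
    rw [aux_symm hP (A *ᵥ x) (B *ᵥ _), ← t B, dotProduct_comm (Bᵀ *ᵥ (P *ᵥ (A *ᵥ x)))]
  rw [e1]
  have e2 : w ⬝ᵥ (γ ^ 2 • (1 : Matrix (Fin m) (Fin m) ℝ) - Bᵀ * P * B) *ᵥ w =
      γ ^ 2 * (w ⬝ᵥ w) - (B *ᵥ w) ⬝ᵥ P *ᵥ (B *ᵥ w) := by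
    simp only [sub_mulVec, dotProduct_sub, ← mulVec_mulVec, t, smul_mulVec, one_mulVec,
      dotProduct_smul, smul_eq_mul]
  have e3 := aux_symm hP (A *ᵥ x) (B *ᵥ w)
  rw [e2, t] at h
  simp only [mulVec_add, add_dotProduct, dotProduct_add]
  linarith

theorem aux_bound {n m : ℕ} (A : Matrix (Fin n) (Fin n) ℝ) (B : Matrix (Fin n) (Fin m) ℝ)
    {Φ : Matrix (Fin n) (Fin n) ℝ} (hΦ : Φ.IsSymm) (γ : ℝ)
    (k : ℕ) (P : Matrix (Fin n) (Fin n) ℝ) (hP : P.IsSymm)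
    (hG : ∀ i < k,
      (γ ^ 2 • (1 : Matrix (Fin m) (Fin m) ℝ) - Bᵀ * ((Ric A B Φ γ)^[i] P) * B).PosDef) :
    (DP A B Φ γ)^[k] (fun y => (((1 / 2) * (y ⬝ᵥ P *ᵥ y) : ℝ) : EReal)) ≤
      fun y => (((1 / 2) * (y ⬝ᵥ (Ric A B Φ γ)^[k] P *ᵥ y) : ℝ) : EReal) := by
  induction k generalizing P with
  | zero => exact le_rfl
  | succ k ih =>
    rw [Function.iterate_succ_apply]
    refine ((aux_DP_mono A B Φ γ).iterate k
      (aux_step A B Φ γ hP (hG 0 (Nat.succ_pos k)))).trans ?_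
    exact ih _ (aux_Ric_symm A B hΦ γ hP) fun i hi => hG (i + 1) (by omega)

/-- Kernel representation of the dynamic programming evolution operator:
`(S_kφ)(x) = sup_y {S_k(x,y) + φ(y)}` for quadratic `φ(y) = ½yᵀP₀y` with `P₀ > M`. -/
theorem dp_operator_kernel_representation {n m : ℕ}
    (A : Matrix (Fin n) (Fin n) ℝ) (B : Matrix (Fin n) (Fin m) ℝ)
    (Φ : Matrix (Fin n) (Fin n) ℝ) (hΦsymm : Φ.IsSymm) (hΦ : Φ.PosDef)
    (γ : ℝ) (hγ : 0 < γ)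
    (M : Matrix (Fin n) (Fin n) ℝ) (hMsymm : M.IsSymm)
    (hM1 : ∀ k : ℕ,
      (γ ^ 2 • (1 : Matrix (Fin m) (Fin m) ℝ) - Bᵀ * ((Ric A B Φ γ)^[k] M) * B).PosDef)
    (hM2 : (Ric A B Φ γ M - M).PosDef)
    (hM3 : (M * B * (γ ^ 2 • (1 : Matrix (Fin m) (Fin m) ℝ) - Bᵀ * M * B)⁻¹ * Bᵀ * M).PosDef)
    (k : ℕ) (hk : 1 ≤ k)
    (Q : Matrix (Fin n ⊕ Fin n) (Fin n ⊕ Fin n) ℝ) (hQsymm : Q.IsSymm)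
    -- `Ŝ_k` is finite and quadratic with Hessian `Q`:
    (hQ : ∀ x z : Fin n → ℝ,
      (DP A B Φ γ)^[k]
          (fun x' => (((1 / 2) * ((x' - z) ⬝ᵥ M *ᵥ (x' - z)) : ℝ) : EReal)) x =
        (((1 / 2) * (Sum.elim x z ⬝ᵥ Q *ᵥ Sum.elim x z) : ℝ) : EReal))
    (hQ22 : (Q.toBlocks₂₂ - M).PosDef)
    (P₀ : Matrix (Fin n) (Fin n) ℝ) (hP₀symm : P₀.IsSymm) (hP₀M : (P₀ - M).PosDef)
    (hP₀ : ∀ i < k,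
      (γ ^ 2 • (1 : Matrix (Fin m) (Fin m) ℝ) - Bᵀ * ((Ric A B Φ γ)^[i] P₀) * B).PosDef)
    (x : Fin n → ℝ) :
    (DP A B Φ γ)^[k] (fun y => (((1 / 2) * (y ⬝ᵥ P₀ *ᵥ y) : ℝ) : EReal)) x =
      ((⨆ y : Fin n → ℝ,
          primalKernel M Q x y + (1 / 2) * (y ⬝ᵥ P₀ *ᵥ y) : ℝ) : EReal) := by
  have hMu : IsUnit M.det := by
    have := hM3.det_pos.ne'.isUnit
    simp only [Matrix.mul_assoc] at this
    rw [det_mul] at this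
    exact isUnit_of_mul_isUnit_left this
  -- dual of the terminal payoff
  obtain ⟨a, ha1, ha2⟩ : ∃ a : (Fin n → ℝ) → ℝ,
      (∀ y z, a y + (1 / 2) * ((z - y) ⬝ᵥ M *ᵥ (z - y)) ≤ (1 / 2) * (z ⬝ᵥ P₀ *ᵥ z)) ∧
      (∀ z, ∃ y, a y + (1 / 2) * ((z - y) ⬝ᵥ M *ᵥ (z - y)) = (1 / 2) * (z ⬝ᵥ P₀ *ᵥ z)) :=
    ⟨_, aux_dual hMsymm hP₀symm hMu hP₀M 0 0
      (fun y => (1 / 2) * (y ⬝ᵥ P₀ *ᵥ y)) (fun z => by simp)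
      (fun y => -(⨆ z : Fin n → ℝ, (1 / 2) * ((z - y) ⬝ᵥ M *ᵥ (z - y)) -
        (1 / 2) * (z ⬝ᵥ P₀ *ᵥ z))) (fun y => rfl)⟩
  have h22 : Q.toBlocks₂₂.IsSymm := by
    ext i j; exact hQsymm.apply _ _
  have h12 : Q.toBlocks₁₂ = Q.toBlocks₂₁ᵀ := by
    ext i j; exact hQsymm.apply _ _
  have hF : ∀ z, (1 / 2) * (Sum.elim x z ⬝ᵥ Q *ᵥ Sum.elim x z) =
      1 / 2 * (z ⬝ᵥ Q.toBlocks₂₂ *ᵥ z) + z ⬝ᵥ (Q.toBlocks₂₁ *ᵥ x) +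
        1 / 2 * (x ⬝ᵥ Q.toBlocks₁₁ *ᵥ x) := by
    intro z
    have e : x ⬝ᵥ Q.toBlocks₁₂ *ᵥ z = z ⬝ᵥ (Q.toBlocks₂₁ *ᵥ x) := by
      rw [h12, mulVec_transpose, dotProduct_comm, ← dotProduct_mulVec]
    conv_lhs => rw [← fromBlocks_toBlocks Q, fromBlocks_mulVec]
    simp only [sumElim_dotProduct_sumElim, dotProduct_add, Sum.elim_comp_inl, Sum.elim_comp_inr]
    rw [e]
    ring
  obtain ⟨hK1, hK2⟩ := aux_dual hMsymm h22 hMu hQ22 _ _ _ hF (primalKernel M Q x) (fun y => rfl)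
  have hsw : ∀ y z : Fin n → ℝ, (y - z) ⬝ᵥ M *ᵥ (y - z) = (z - y) ⬝ᵥ M *ᵥ (z - y) := by
    intro y z
    rw [← neg_sub z y, mulVec_neg, neg_dotProduct_neg]
  have hφ : (fun y => (((1 / 2) * (y ⬝ᵥ P₀ *ᵥ y) : ℝ) : EReal)) =
      fun y => ⨆ z, ((a z : EReal) + (((1 / 2) * ((y - z) ⬝ᵥ M *ᵥ (y - z)) : ℝ) : EReal)) := by
    funext y
    apply le_antisymm
    · obtain ⟨z, hz⟩ := ha2 y
      rw [← hz, EReal.coe_add]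
      exact le_iSup (fun z => ((a z : EReal) +
        (((1 / 2) * ((y - z) ⬝ᵥ M *ᵥ (y - z)) : ℝ) : EReal))) z
    · refine iSup_le fun z => ?_
      rw [← EReal.coe_add, EReal.coe_le_coe_iff]
      exact ha1 z y
  have hbd := aux_bound A B hΦsymm γ k P₀ hP₀symm hP₀ x
  have hmain : (DP A B Φ γ)^[k] (fun y => (((1 / 2) * (y ⬝ᵥ P₀ *ᵥ y) : ℝ) : EReal)) x =
      ⨆ y : Fin n → ℝ, ((primalKernel M Q x y + (1 / 2) * (y ⬝ᵥ P₀ *ᵥ y) : ℝ) : EReal) := by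
    rw [hφ, aux_DP_lin]
    simp only [hQ]
    apply le_antisymm
    · refine iSup_le fun z => ?_
      obtain ⟨y, hy⟩ := hK2 z
      refine le_trans ?_ (le_iSup _ y)
      rw [← EReal.coe_add, EReal.coe_le_coe_iff, ← hy]
      have := ha1 z y
      rw [hsw] at this
      linarith
    · refine iSup_le fun y => ?_
      obtain ⟨z, hz⟩ := ha2 y
      refine le_trans ?_ (le_iSup _ z)
      rw [← EReal.coe_add, EReal.coe_le_coe_iff]
      have := hK1 y z
      rw [hsw] at hz
      linarith
  rw [hmain] at hbd ⊢
  have hle : ∀ y, primalKernel M Q x y + (1 / 2) * (y ⬝ᵥ P₀ *ᵥ y) ≤ _ := fun y =>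
    EReal.coe_le_coe_iff.1 ((le_iSup (fun y =>
      ((primalKernel M Q x y + (1 / 2) * (y ⬝ᵥ P₀ *ᵥ y) : ℝ) : EReal)) y).trans hbd)
  apply le_antisymm
  · refine iSup_le fun y => ?_
    rw [EReal.coe_le_coe_iff]
    exact le_ciSup (f := fun y => primalKernel M Q x y + (1 / 2) * (y ⬝ᵥ P₀ *ᵥ y))
      ⟨_, by rintro _ ⟨y, rfl⟩; exact hle y⟩ y
  · set T := ⨆ y : Fin n → ℝ,
      ((primalKernel M Q x y + (1 / 2) * (y ⬝ᵥ P₀ *ᵥ y) : ℝ) : EReal) with hT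
    have hTt : T ≠ ⊤ := fun h => by
      rw [h] at hbd
      exact EReal.coe_ne_top _ (top_le_iff.1 hbd)
    have hT0 : ((primalKernel M Q x 0 + (1 / 2) * ((0 : Fin n → ℝ) ⬝ᵥ P₀ *ᵥ 0) : ℝ) : EReal) ≤ T :=
      le_iSup (fun y : Fin n → ℝ =>
        ((primalKernel M Q x y + (1 / 2) * (y ⬝ᵥ P₀ *ᵥ y) : ℝ) : EReal)) 0
    have hTb : T ≠ ⊥ := fun h => by
      rw [h] at hT0
      exact EReal.coe_ne_bot _ (le_bot_iff.1 hT0)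
    rw [← EReal.coe_toReal hTt hTb, EReal.coe_le_coe_iff]
    refine ciSup_le fun y => ?_
    rw [← EReal.coe_le_coe_iff, EReal.coe_toReal hTt hTb]
    exact le_iSup (fun y : Fin n → ℝ =>
        ((primalKernel M Q x y + (1 / 2) * (y ⬝ᵥ P₀ *ᵥ y) : ℝ) : EReal)) y
end

section
/- Max-plus convolution of quadratic kernels (computational core of the semigroup propagation rule): Let Θ₁ and Θ₂ be symmetric 2n×2n real matrices with n×n blocks Θ_i¹¹, Θ_i¹², Θ_i²¹ = (Θ_i¹²)ᵀ, Θ_i²², and suppose Π := Θ₁²² + Θ₂¹¹ is negative definite. Then for all x, y ∈ ℝⁿ, sup_{ρ∈ℝⁿ} { (1/2)[x;ρ]ᵀΘ₁[x;ρ] + (1/2)[ρ;y]ᵀΘ₂[ρ;y] } is attained and equals (1/2)[x;y]ᵀ(Θ₁ ⊛ Θ₂)[x;y]. -/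
open Matrix

/-- Max-plus convolution of quadratic kernels: for symmetric `2n×2n` matrices `Θ₁, Θ₂`
(with `Θᵢ²¹ = (Θᵢ¹²)ᵀ`) such that `Π = Θ₁²² + Θ₂¹¹` is negative definite, the supremum
over `ρ` of `½[x;ρ]ᵀΘ₁[x;ρ] + ½[ρ;y]ᵀΘ₂[ρ;y]` is attained and equals
`½[x;y]ᵀ(Θ₁ ⊛ Θ₂)[x;y]`. -/
theorem maxplus_convolution_quadratic {n : ℕ}
    (T₁11 T₁12 T₁22 T₂11 T₂12 T₂22 : Matrix (Fin n) (Fin n) ℝ)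
    (hT₁11 : T₁11.IsSymm) (hT₁22 : T₁22.IsSymm)
    (hT₂11 : T₂11.IsSymm) (hT₂22 : T₂22.IsSymm)
    (hPi : (-(T₁22 + T₂11)).PosDef)
    (x y : Fin n → ℝ) :
    IsGreatest
      (Set.range fun ρ : Fin n → ℝ =>
        (1 / 2) * (Sum.elim x ρ ⬝ᵥ fromBlocks T₁11 T₁12 T₁12ᵀ T₁22 *ᵥ Sum.elim x ρ) +
          (1 / 2) * (Sum.elim ρ y ⬝ᵥ fromBlocks T₂11 T₂12 T₂12ᵀ T₂22 *ᵥ Sum.elim ρ y))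
      ((1 / 2) * (Sum.elim x y ⬝ᵥ
        fromBlocks
          (T₁11 - T₁12 * (T₁22 + T₂11)⁻¹ * T₁12ᵀ)
          (-(T₁12 * (T₁22 + T₂11)⁻¹ * T₂12))
          (-(T₂12ᵀ * (T₁22 + T₂11)⁻¹ * T₁12ᵀ))
          (T₂22 - T₂12ᵀ * (T₁22 + T₂11)⁻¹ * T₂12) *ᵥ Sum.elim x y)) := by
  have hu : IsUnit (T₁22 + T₂11) := by
    have h := hPi.isUnit
    simpa using h.neg
  have hdet : IsUnit (T₁22 + T₂11).det := (Matrix.isUnit_iff_isUnit_det _).1 hu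
  have hPs : (T₁22 + T₂11)ᵀ = T₁22 + T₂11 := by
    rw [transpose_add, hT₁22.eq, hT₂11.eq]
  have e1 : ∀ w : Fin n → ℝ, x ⬝ᵥ T₁12 *ᵥ w = (T₁12ᵀ *ᵥ x) ⬝ᵥ w := by
    intro w; rw [dotProduct_mulVec, mulVec_transpose]
  have e2 : ∀ w : Fin n → ℝ, y ⬝ᵥ T₂12ᵀ *ᵥ w = (T₂12 *ᵥ y) ⬝ᵥ w := by
    intro w; rw [dotProduct_mulVec, vecMul_transpose]
  have e3 : ∀ w : Fin n → ℝ, w ⬝ᵥ T₂12 *ᵥ y = (T₂12 *ᵥ y) ⬝ᵥ w := by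
    intro w; rw [dotProduct_comm]
  have e4 : ∀ w : Fin n → ℝ, w ⬝ᵥ T₁12ᵀ *ᵥ x = (T₁12ᵀ *ᵥ x) ⬝ᵥ w := by
    intro w; rw [dotProduct_comm]
  obtain ⟨r, hr⟩ : ∃ r, r = -((T₁22 + T₂11)⁻¹ *ᵥ (T₁12ᵀ *ᵥ x + T₂12 *ᵥ y)) := ⟨_, rfl⟩
  have hPr : (T₁22 + T₂11) *ᵥ r = -(T₁12ᵀ *ᵥ x + T₂12 *ᵥ y) := by
    rw [hr, mulVec_neg, mulVec_mulVec, Matrix.mul_nonsing_inv _ hdet, one_mulVec]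
  have key : ∀ ρ : Fin n → ℝ,
      (1 / 2) * (Sum.elim x ρ ⬝ᵥ fromBlocks T₁11 T₁12 T₁12ᵀ T₁22 *ᵥ Sum.elim x ρ) +
          (1 / 2) * (Sum.elim ρ y ⬝ᵥ fromBlocks T₂11 T₂12 T₂12ᵀ T₂22 *ᵥ Sum.elim ρ y) =
      ((1 / 2) * (Sum.elim x y ⬝ᵥ
        fromBlocks
          (T₁11 - T₁12 * (T₁22 + T₂11)⁻¹ * T₁12ᵀ)
          (-(T₁12 * (T₁22 + T₂11)⁻¹ * T₂12))
          (-(T₂12ᵀ * (T₁22 + T₂11)⁻¹ * T₁12ᵀ))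
          (T₂22 - T₂12ᵀ * (T₁22 + T₂11)⁻¹ * T₂12) *ᵥ Sum.elim x y)) +
      (1 / 2) * ((ρ - r) ⬝ᵥ (T₁22 + T₂11) *ᵥ (ρ - r)) := by
    intro ρ
    have q : (ρ - r) ⬝ᵥ (T₁22 + T₂11) *ᵥ (ρ - r) =
        ρ ⬝ᵥ T₁22 *ᵥ ρ + ρ ⬝ᵥ T₂11 *ᵥ ρ
        + 2 * ((T₁12ᵀ *ᵥ x) ⬝ᵥ ρ + (T₂12 *ᵥ y) ⬝ᵥ ρ)
        - ((T₁12ᵀ *ᵥ x) ⬝ᵥ r + (T₂12 *ᵥ y) ⬝ᵥ r) := by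
      have h1 : r ⬝ᵥ (T₁22 + T₂11) *ᵥ ρ = ((T₁22 + T₂11) *ᵥ r) ⬝ᵥ ρ := by
        rw [dotProduct_mulVec, ← mulVec_transpose, hPs]
      have h2 : ρ ⬝ᵥ T₁22 *ᵥ ρ + ρ ⬝ᵥ T₂11 *ᵥ ρ = ρ ⬝ᵥ (T₁22 + T₂11) *ᵥ ρ := by
        rw [add_mulVec, dotProduct_add]
      rw [h2, mulVec_sub, sub_dotProduct, dotProduct_sub, dotProduct_sub, h1, hPr]
      simp only [neg_dotProduct, dotProduct_neg, add_dotProduct, dotProduct_add, e3, e4]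
      ring
    rw [q, hr]
    simp only [fromBlocks_mulVec, Sum.elim_comp_inl, Sum.elim_comp_inr,
      sumElim_dotProduct_sumElim, sub_mulVec, neg_mulVec, ← mulVec_mulVec, dotProduct_add,
      dotProduct_sub, dotProduct_neg, mulVec_add, e1, e2, e3, e4]
    ring
  constructor
  · refine ⟨r, ?_⟩
    simp only [key r, sub_self, zero_dotProduct, mul_zero, add_zero]
  · rintro _ ⟨ρ, rfl⟩
    simp only [key ρ]
    have h := hPi.posSemidef.dotProduct_mulVec_nonneg (ρ - r)
    rw [neg_mulVec, dotProduct_neg, star_trivial] at h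
    linarith
end

section
/- Dual transform of a quadratic bivariate function in its second argument (the relation Λ = Π⁻¹(Q) and the formula for Λ₁): Let M be a symmetric n×n real matrix and let Q be a symmetric 2n×2n real matrix with n×n blocks Q¹¹, Q¹², Q²¹ = (Q¹²)ᵀ, Q²² such that Q²² − M is positive definite. Define Ŝ(x,z) = (1/2)[x;z]ᵀQ[x;z]. Then for all x, y ∈ ℝⁿ, −sup_{z∈ℝⁿ} { (1/2)(z−y)ᵀM(z−y) − Ŝ(x,z) } = (1/2)[x;y]ᵀΛ[x;y], where Λ is the symmetric 2n×2n matrix with blocks Λ¹¹ = Q¹¹ + Q¹²(M−Q²²)⁻¹Q²¹, Λ¹² = Q¹²(M−Q²²)⁻¹M, Λ²¹ = M(M−Q²²)⁻¹Q²¹, Λ²² = M(M−Q²²)⁻¹M − M. -/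
open Matrix

/-- Dual transform of a quadratic bivariate function in its second argument:
for `Q²² − M` positive definite, `−sup_z {½(z−y)ᵀM(z−y) − ½[x;z]ᵀQ[x;z]} = ½[x;y]ᵀΛ[x;y]`
with `Λ¹¹ = Q¹¹ + Q¹²(M−Q²²)⁻¹Q²¹`, `Λ¹² = Q¹²(M−Q²²)⁻¹M`, `Λ²¹ = M(M−Q²²)⁻¹Q²¹`,
`Λ²² = M(M−Q²²)⁻¹M − M`. -/
theorem dual_transform_second_argument {n : ℕ}
    (M Q11 Q12 Q22 : Matrix (Fin n) (Fin n) ℝ)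
    (hMsymm : M.IsSymm) (hQ11 : Q11.IsSymm) (hQ22 : Q22.IsSymm)
    (hQ22M : (Q22 - M).PosDef)
    (x y : Fin n → ℝ) :
    -(⨆ z : Fin n → ℝ,
        (1 / 2) * ((z - y) ⬝ᵥ M *ᵥ (z - y)) -
          (1 / 2) * (Sum.elim x z ⬝ᵥ fromBlocks Q11 Q12 Q12ᵀ Q22 *ᵥ Sum.elim x z)) =
      (1 / 2) * (Sum.elim x y ⬝ᵥ
        fromBlocks
          (Q11 + Q12 * (M - Q22)⁻¹ * Q12ᵀ)
          (Q12 * (M - Q22)⁻¹ * M)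
          (M * (M - Q22)⁻¹ * Q12ᵀ)
          (M * (M - Q22)⁻¹ * M - M) *ᵥ Sum.elim x y) := by
  obtain ⟨R, hR⟩ : ∃ R, R = (M - Q22)⁻¹ := ⟨_, rfl⟩
  have hdet : IsUnit (M - Q22).det := by
    have h1 : IsUnit (Q22 - M) := hQ22M.isUnit
    have h2 : IsUnit (M - Q22) := by
      rw [← neg_sub]
      exact h1.neg
    exact (Matrix.isUnit_iff_isUnit_det _).1 h2
  have hNR : (M - Q22) * R = 1 := by
    rw [hR]
    exact Matrix.mul_nonsing_inv _ hdet
  rw [← hR]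
  have hsw : ∀ (A : Matrix (Fin n) (Fin n) ℝ) (v w : Fin n → ℝ),
      v ⬝ᵥ A *ᵥ w = (Aᵀ *ᵥ v) ⬝ᵥ w := by
    intro A v w
    rw [Matrix.dotProduct_mulVec, Matrix.mulVec_transpose]
  obtain ⟨a, ha⟩ : ∃ a, a = Q12ᵀ *ᵥ x := ⟨_, rfl⟩
  obtain ⟨b, hb⟩ : ∃ b, b = M *ᵥ y := ⟨_, rfl⟩
  obtain ⟨u, hu⟩ : ∃ u, u = R *ᵥ (a + b) := ⟨_, rfl⟩
  have hNu : M *ᵥ u - Q22 *ᵥ u = a + b := by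
    rw [← Matrix.sub_mulVec, hu, Matrix.mulVec_mulVec, hNR, Matrix.one_mulVec]
  have hxQ : ∀ v, x ⬝ᵥ Q12 *ᵥ v = a ⬝ᵥ v := by
    intro v
    rw [hsw, ha]
  have hyM : ∀ v, y ⬝ᵥ M *ᵥ v = b ⬝ᵥ v := by
    intro v
    rw [hsw, hMsymm.eq, hb]
  have hrhs : Sum.elim x y ⬝ᵥ
        fromBlocks
          (Q11 + Q12 * R * Q12ᵀ)
          (Q12 * R * M)
          (M * R * Q12ᵀ)
          (M * R * M - M) *ᵥ Sum.elim x y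
      = x ⬝ᵥ Q11 *ᵥ x + (a ⬝ᵥ u + b ⬝ᵥ u) - b ⬝ᵥ y := by
    rw [Matrix.fromBlocks_mulVec, sumElim_dotProduct_sumElim]
    simp only [Sum.elim_comp_inl, Sum.elim_comp_inr, Matrix.add_mulVec, Matrix.sub_mulVec,
      ← Matrix.mulVec_mulVec, dotProduct_add, dotProduct_sub, hxQ, hyM, hu, Matrix.mulVec_add,
      ← ha, ← hb]
    rw [← hyM y, ← hb]
    ring
  have hf : ∀ z : Fin n → ℝ, (1 / 2) * ((z - y) ⬝ᵥ M *ᵥ (z - y)) -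
          (1 / 2) * (Sum.elim x z ⬝ᵥ fromBlocks Q11 Q12 Q12ᵀ Q22 *ᵥ Sum.elim x z)
      = -((1 / 2) * (x ⬝ᵥ Q11 *ᵥ x + (a ⬝ᵥ u + b ⬝ᵥ u) - b ⬝ᵥ y))
        - (1 / 2) * ((z - u) ⬝ᵥ (Q22 - M) *ᵥ (z - u)) := by
    intro z
    have e1 : z ⬝ᵥ M *ᵥ u - z ⬝ᵥ Q22 *ᵥ u = z ⬝ᵥ a + z ⬝ᵥ b := by
      rw [← dotProduct_sub, hNu, dotProduct_add]
    have e2 : u ⬝ᵥ M *ᵥ u - u ⬝ᵥ Q22 *ᵥ u = u ⬝ᵥ a + u ⬝ᵥ b := by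
      rw [← dotProduct_sub, hNu, dotProduct_add]
    have e3 : u ⬝ᵥ M *ᵥ z = z ⬝ᵥ M *ᵥ u := by
      rw [hsw, hMsymm.eq, dotProduct_comm]
    have e4 : u ⬝ᵥ Q22 *ᵥ z = z ⬝ᵥ Q22 *ᵥ u := by
      rw [hsw, hQ22.eq, dotProduct_comm]
    rw [Matrix.fromBlocks_mulVec, sumElim_dotProduct_sumElim]
    simp only [Sum.elim_comp_inl, Sum.elim_comp_inr, Matrix.sub_mulVec, Matrix.mulVec_sub,
      dotProduct_add, dotProduct_sub, sub_dotProduct, hxQ, hyM, ← ha, ← hb, e3, e4]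
    rw [dotProduct_comm y b, dotProduct_comm a z, dotProduct_comm b z, dotProduct_comm a u,
      dotProduct_comm b u]
    linarith
  rw [hrhs]
  simp only [hf]
  have hsup : IsLUB (Set.range fun z : Fin n → ℝ =>
      -((1 / 2) * (x ⬝ᵥ Q11 *ᵥ x + (a ⬝ᵥ u + b ⬝ᵥ u) - b ⬝ᵥ y))
        - (1 / 2) * ((z - u) ⬝ᵥ (Q22 - M) *ᵥ (z - u)))
      (-((1 / 2) * (x ⬝ᵥ Q11 *ᵥ x + (a ⬝ᵥ u + b ⬝ᵥ u) - b ⬝ᵥ y))) := by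
    apply IsGreatest.isLUB
    refine ⟨⟨u, by simp⟩, ?_⟩
    rintro _ ⟨z, rfl⟩
    have h := hQ22M.posSemidef.dotProduct_mulVec_nonneg (z - u)
    rw [star_trivial] at h
    dsimp only
    linarith
  have := hsup.ciSup_eq
  rw [this, neg_neg]
end

section
/- Dual transform of a quadratic bivariate function in its first argument (the relation Θ = Γ⁻¹(Q) and the formula for Θ₁): Let M be a symmetric n×n real matrix and let Q be a symmetric 2n×2n real matrix with n×n blocks Q¹¹, Q¹², Q²¹ = (Q¹²)ᵀ, Q²² such that Q¹¹ − M is positive definite. Define Ŝ(x,z) = (1/2)[x;z]ᵀQ[x;z]. Then for all y, z ∈ ℝⁿ, −sup_{x∈ℝⁿ} { (1/2)(x−y)ᵀM(x−y) − Ŝ(x,z) } = (1/2)[y;z]ᵀΘ[y;z], where Θ is the symmetric 2n×2n matrix with blocks Θ¹¹ = M(M−Q¹¹)⁻¹M − M, Θ¹² = M(M−Q¹¹)⁻¹Q¹², Θ²¹ = Q²¹(M−Q¹¹)⁻¹M, Θ²² = Q²¹(M−Q¹¹)⁻¹Q¹² + Q²². -/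
open Matrix

/-- Dual transform of a quadratic bivariate function in its first argument:
for `Q¹¹ − M` positive definite, `−sup_x {½(x−y)ᵀM(x−y) − ½[x;z]ᵀQ[x;z]} = ½[y;z]ᵀΘ[y;z]`
with `Θ¹¹ = M(M−Q¹¹)⁻¹M − M`, `Θ¹² = M(M−Q¹¹)⁻¹Q¹²`, `Θ²¹ = Q²¹(M−Q¹¹)⁻¹M`,
`Θ²² = Q²¹(M−Q¹¹)⁻¹Q¹² + Q²²`. -/
theorem dual_transform_first_argument {n : ℕ}
    (M Q11 Q12 Q22 : Matrix (Fin n) (Fin n) ℝ)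
    (hMsymm : M.IsSymm) (hQ11 : Q11.IsSymm) (hQ22 : Q22.IsSymm)
    (hQ11M : (Q11 - M).PosDef)
    (y z : Fin n → ℝ) :
    -(⨆ x : Fin n → ℝ,
        (1 / 2) * ((x - y) ⬝ᵥ M *ᵥ (x - y)) -
          (1 / 2) * (Sum.elim x z ⬝ᵥ fromBlocks Q11 Q12 Q12ᵀ Q22 *ᵥ Sum.elim x z)) =
      (1 / 2) * (Sum.elim y z ⬝ᵥ
        fromBlocks
          (M * (M - Q11)⁻¹ * M - M)
          (M * (M - Q11)⁻¹ * Q12)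
          (Q12ᵀ * (M - Q11)⁻¹ * M)
          (Q12ᵀ * (M - Q11)⁻¹ * Q12 + Q22) *ᵥ Sum.elim y z) := by
  have hM : ∀ u v : Fin n → ℝ, u ⬝ᵥ M *ᵥ v = v ⬝ᵥ M *ᵥ u := fun u v => by
    rw [dotProduct_mulVec, ← mulVec_transpose, hMsymm.eq, dotProduct_comm]
  have hQ : ∀ u v : Fin n → ℝ, u ⬝ᵥ Q11 *ᵥ v = v ⬝ᵥ Q11 *ᵥ u := fun u v => by
    rw [dotProduct_mulVec, ← mulVec_transpose, hQ11.eq, dotProduct_comm]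
  have hT : ∀ u v : Fin n → ℝ, u ⬝ᵥ Q12ᵀ *ᵥ v = v ⬝ᵥ Q12 *ᵥ u := fun u v => by
    rw [dotProduct_mulVec, vecMul_transpose, dotProduct_comm]
  have hdet : IsUnit (M - Q11).det := by
    rw [← isUnit_iff_isUnit_det, ← neg_sub]
    exact hQ11M.isUnit.neg
  obtain ⟨p, hp⟩ : ∃ p, p = (M - Q11)⁻¹ *ᵥ (M *ᵥ y) := ⟨_, rfl⟩
  obtain ⟨q, hq⟩ : ∃ q, q = (M - Q11)⁻¹ *ᵥ (Q12 *ᵥ z) := ⟨_, rfl⟩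
  have hx0 : M *ᵥ (p + q) - Q11 *ᵥ (p + q) = M *ᵥ y + Q12 *ᵥ z := by
    rw [← sub_mulVec, hp, hq, ← mulVec_add, mulVec_mulVec, mul_nonsing_inv _ hdet, one_mulVec]
  have hR : Sum.elim y z ⬝ᵥ
        fromBlocks
          (M * (M - Q11)⁻¹ * M - M)
          (M * (M - Q11)⁻¹ * Q12)
          (Q12ᵀ * (M - Q11)⁻¹ * M)
          (Q12ᵀ * (M - Q11)⁻¹ * Q12 + Q22) *ᵥ Sum.elim y z =
      (p + q) ⬝ᵥ (M *ᵥ y + Q12 *ᵥ z) - y ⬝ᵥ M *ᵥ y + z ⬝ᵥ Q22 *ᵥ z := by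
    simp only [fromBlocks_mulVec, sumElim_dotProduct_sumElim, Sum.elim_comp_inl, Sum.elim_comp_inr,
      sub_mulVec, add_mulVec, ← mulVec_mulVec, ← hp, ← hq, dotProduct_add, dotProduct_sub,
      add_dotProduct, hT]
    rw [hM y p, hM y q]
    ring
  have key : ∀ x : Fin n → ℝ, (1 / 2) * ((x - y) ⬝ᵥ M *ᵥ (x - y)) -
          (1 / 2) * (Sum.elim x z ⬝ᵥ fromBlocks Q11 Q12 Q12ᵀ Q22 *ᵥ Sum.elim x z) =
      -((1 / 2) * ((p + q) ⬝ᵥ (M *ᵥ y + Q12 *ᵥ z) - y ⬝ᵥ M *ᵥ y + z ⬝ᵥ Q22 *ᵥ z)) -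
        (1 / 2) * ((x - (p + q)) ⬝ᵥ (Q11 - M) *ᵥ (x - (p + q))) := by
    intro x
    generalize p + q = r at hx0
    have h1 := congrArg (fun v => x ⬝ᵥ v) hx0
    have h2 := congrArg (fun v => r ⬝ᵥ v) hx0
    simp only [fromBlocks_mulVec, sumElim_dotProduct_sumElim, Sum.elim_comp_inl, Sum.elim_comp_inr,
      sub_mulVec, mulVec_sub, dotProduct_add, dotProduct_sub,
      sub_dotProduct, hT] at h1 h2 ⊢
    rw [hM y x, hM r x, hQ r x]
    linarith
  rw [hR, neg_eq_iff_eq_neg]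
  simp only [key]
  have hnn : ∀ v : Fin n → ℝ, 0 ≤ v ⬝ᵥ (Q11 - M) *ᵥ v := fun v => by
    simpa using hQ11M.posSemidef.dotProduct_mulVec_nonneg v
  apply le_antisymm
  · exact ciSup_le fun x => by linarith [hnn (x - (p + q))]
  · refine le_ciSup_of_le ⟨-((1 / 2) * ((p + q) ⬝ᵥ (M *ᵥ y + Q12 *ᵥ z) - y ⬝ᵥ M *ᵥ y + z ⬝ᵥ Q22 *ᵥ z)),
      ?_⟩ (p + q) ?_
    · rintro _ ⟨x, rfl⟩
      have := hnn (x - (p + q))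
      dsimp only
      linarith
    · simp
end

section
/- Correspondence between the primal and dual space fundamental solution Hessians (Theorem that Λ = Ξ(Θ)): Let M be a symmetric invertible n×n real matrix and let Q be a symmetric 2n×2n real matrix with blocks Q¹¹, Q¹², Q²¹ = (Q¹²)ᵀ, Q²² such that both Q¹¹ − M and Q²² − M are positive definite. Define Ŝ(x,z) = (1/2)[x;z]ᵀQ[x;z], and let Θ and Λ be the symmetric 2n×2n Hessians determined by the identities −sup_{x∈ℝⁿ}{ (1/2)(x−y)ᵀM(x−y) − Ŝ(x,z) } = (1/2)[y;z]ᵀΘ[y;z] and −sup_{z∈ℝⁿ}{ (1/2)(z−y)ᵀM(z−y) − Ŝ(x,z) } = (1/2)[x;y]ᵀΛ[x;y]. Then Λ = Ξ(Θ), where Ξ = Π⁻¹ ∘ Γ; equivalently, Γ(Θ) = Π(Λ) = Q. -/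
open Matrix

/-- The operation `Γ` on symmetric `2n×2n` matrices `Ω` (with `M + Ω¹¹` invertible):
blocks `M − M(M+Ω¹¹)⁻¹M`, `M(M+Ω¹¹)⁻¹Ω¹²`, `Ω²¹(M+Ω¹¹)⁻¹M`, `Ω²² − Ω²¹(M+Ω¹¹)⁻¹Ω¹²`. -/
noncomputable def GamOp {n : ℕ} (M : Matrix (Fin n) (Fin n) ℝ)
    (Ω : Matrix (Fin n ⊕ Fin n) (Fin n ⊕ Fin n) ℝ) :
    Matrix (Fin n ⊕ Fin n) (Fin n ⊕ Fin n) ℝ :=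
  fromBlocks
    (M - M * (M + Ω.toBlocks₁₁)⁻¹ * M)
    (M * (M + Ω.toBlocks₁₁)⁻¹ * Ω.toBlocks₁₂)
    (Ω.toBlocks₂₁ * (M + Ω.toBlocks₁₁)⁻¹ * M)
    (Ω.toBlocks₂₂ - Ω.toBlocks₂₁ * (M + Ω.toBlocks₁₁)⁻¹ * Ω.toBlocks₁₂)

/-- The block-swap operation `Δ`. -/
def DeltOp {n : ℕ} (Ω : Matrix (Fin n ⊕ Fin n) (Fin n ⊕ Fin n) ℝ) :
    Matrix (Fin n ⊕ Fin n) (Fin n ⊕ Fin n) ℝ :=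
  fromBlocks Ω.toBlocks₂₂ Ω.toBlocks₂₁ Ω.toBlocks₁₂ Ω.toBlocks₁₁

/-- The operation `Π = Δ ∘ Γ ∘ Δ`. -/
noncomputable def PiOp {n : ℕ} (M : Matrix (Fin n) (Fin n) ℝ)
    (Ω : Matrix (Fin n ⊕ Fin n) (Fin n ⊕ Fin n) ℝ) :
    Matrix (Fin n ⊕ Fin n) (Fin n ⊕ Fin n) ℝ :=
  DeltOp (GamOp M (DeltOp Ω))

/-- The operation `Π⁻¹(Ω) = −Π(−Ω)`. -/
noncomputable def PiInvOp {n : ℕ} (M : Matrix (Fin n) (Fin n) ℝ)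
    (Ω : Matrix (Fin n ⊕ Fin n) (Fin n ⊕ Fin n) ℝ) :
    Matrix (Fin n ⊕ Fin n) (Fin n ⊕ Fin n) ℝ :=
  -(PiOp M (-Ω))

/-- The operation `Ξ = Π⁻¹ ∘ Γ`. -/
noncomputable def XiOp {n : ℕ} (M : Matrix (Fin n) (Fin n) ℝ)
    (Ω : Matrix (Fin n ⊕ Fin n) (Fin n ⊕ Fin n) ℝ) :
    Matrix (Fin n ⊕ Fin n) (Fin n ⊕ Fin n) ℝ :=
  PiInvOp M (GamOp M Ω)

theorem aux_quad_ext {m : Type*} [Fintype m] [DecidableEq m] (X Y : Matrix m m ℝ)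
    (hX : X.IsSymm) (hY : Y.IsSymm) (h : ∀ v, v ⬝ᵥ X *ᵥ v = v ⬝ᵥ Y *ᵥ v) : X = Y := by
  have pol : ∀ Z : Matrix m m ℝ, Z.IsSymm → ∀ u v,
      (u + v) ⬝ᵥ Z *ᵥ (u + v) = u ⬝ᵥ Z *ᵥ u + 2 * (u ⬝ᵥ Z *ᵥ v) + v ⬝ᵥ Z *ᵥ v := by
    intro Z hZ u v
    have h1 : v ⬝ᵥ Z *ᵥ u = u ⬝ᵥ Z *ᵥ v := by
      rw [dotProduct_mulVec, ← mulVec_transpose, hZ.eq, dotProduct_comm]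
    simp only [mulVec_add, dotProduct_add, add_dotProduct, h1]
    ring
  ext i j
  have h1 := h (Pi.single i 1 + Pi.single j 1)
  rw [pol X hX, pol Y hY, h, h] at h1
  have h2 : (Pi.single i 1 : m → ℝ) ⬝ᵥ X *ᵥ (Pi.single j 1) = (Pi.single i 1) ⬝ᵥ Y *ᵥ (Pi.single j 1) := by
    linarith
  simpa using h2

theorem aux_core {n : ℕ} (M A B C : Matrix (Fin n) (Fin n) ℝ) (hM : M.IsSymm)
    (hA : A.IsSymm) (hC : C.IsSymm) (hP : (A - M).PosDef)
    (Θ : Matrix (Fin n ⊕ Fin n) (Fin n ⊕ Fin n) ℝ) (hΘs : Θ.IsSymm)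
    (hΘ : ∀ y z : Fin n → ℝ,
      -(⨆ x : Fin n → ℝ,
          (1 / 2) * ((x - y) ⬝ᵥ M *ᵥ (x - y)) -
            (1 / 2) * (Sum.elim x z ⬝ᵥ fromBlocks A B Bᵀ C *ᵥ Sum.elim x z)) =
        (1 / 2) * (Sum.elim y z ⬝ᵥ Θ *ᵥ Sum.elim y z)) :
    Θ = fromBlocks (-M - M * (A - M)⁻¹ * M) (-(M * (A - M)⁻¹ * B))
      (-(Bᵀ * (A - M)⁻¹ * M)) (C - Bᵀ * (A - M)⁻¹ * B) := by
  obtain ⟨P, hPdef⟩ : ∃ P, P = A - M := ⟨_, rfl⟩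
  have hAe : A = M + P := by rw [hPdef]; abel
  rw [← hPdef] at hP ⊢
  have hPs : Pᵀ = P := by rw [hPdef, transpose_sub, hA.eq, hM.eq]
  have hPu : IsUnit P.det := (Matrix.isUnit_iff_isUnit_det _).1 hP.isUnit
  have hPis : P⁻¹ᵀ = P⁻¹ := by rw [transpose_nonsing_inv, hPs]
  have sw : ∀ (Z : Matrix (Fin n) (Fin n) ℝ) (u v : Fin n → ℝ), (Z *ᵥ u) ⬝ᵥ v = u ⬝ᵥ Zᵀ *ᵥ v := by
    intro Z u v
    rw [dotProduct_comm, dotProduct_mulVec, ← mulVec_transpose, dotProduct_comm]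
  apply aux_quad_ext _ _ hΘs
  · unfold Matrix.IsSymm
    rw [fromBlocks_transpose]
    simp [transpose_mul, hM.eq, hC.eq, hPis, Matrix.mul_assoc]
  intro v
  obtain ⟨y, z, rfl⟩ : ∃ y z, v = Sum.elim y z :=
    ⟨v ∘ Sum.inl, v ∘ Sum.inr, (Sum.elim_comp_inl_inr v).symm⟩
  have key := hΘ y z
  obtain ⟨w, hw⟩ : ∃ w, w = P⁻¹ *ᵥ (M *ᵥ y + B *ᵥ z) := ⟨_, rfl⟩
  have hPw : P *ᵥ w = M *ᵥ y + B *ᵥ z := by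
    rw [hw, mulVec_mulVec, Matrix.mul_nonsing_inv _ hPu, one_mulVec]
  have hf : ∀ x : Fin n → ℝ, (1 / 2) * ((x - y) ⬝ᵥ M *ᵥ (x - y)) -
            (1 / 2) * (Sum.elim x z ⬝ᵥ fromBlocks A B Bᵀ C *ᵥ Sum.elim x z) =
      ((1/2) * (w ⬝ᵥ P *ᵥ w) + (1/2) * (y ⬝ᵥ M *ᵥ y) - (1/2) * (z ⬝ᵥ C *ᵥ z))
        - (1/2) * ((x + w) ⬝ᵥ P *ᵥ (x + w)) := by
    intro x
    have e1 : w ⬝ᵥ P *ᵥ x = x ⬝ᵥ P *ᵥ w := by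
      rw [dotProduct_comm, sw, hPs]
    have e2 : y ⬝ᵥ M *ᵥ x = x ⬝ᵥ M *ᵥ y := by
      rw [dotProduct_comm, sw, hM.eq]
    have e3 : z ⬝ᵥ Bᵀ *ᵥ x = x ⬝ᵥ B *ᵥ z := by
      rw [dotProduct_comm, sw, transpose_transpose]
    have e4 : x ⬝ᵥ P *ᵥ w = x ⬝ᵥ M *ᵥ y + x ⬝ᵥ B *ᵥ z := by
      rw [hPw, dotProduct_add]
    rw [hAe]
    simp only [fromBlocks_mulVec, sumElim_dotProduct_sumElim, Sum.elim_comp_inl, Sum.elim_comp_inr, mulVec_add,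
      mulVec_sub, add_mulVec, dotProduct_add, dotProduct_sub, add_dotProduct, sub_dotProduct, e1, e2, e3]
    linarith
  have hsup : (⨆ x : Fin n → ℝ, (1 / 2) * ((x - y) ⬝ᵥ M *ᵥ (x - y)) -
            (1 / 2) * (Sum.elim x z ⬝ᵥ fromBlocks A B Bᵀ C *ᵥ Sum.elim x z)) =
      ((1/2) * (w ⬝ᵥ P *ᵥ w) + (1/2) * (y ⬝ᵥ M *ᵥ y) - (1/2) * (z ⬝ᵥ C *ᵥ z)) := by
    apply IsGreatest.csSup_eq
    constructor
    · refine ⟨-w, ?_⟩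
      simp only [hf]
      simp
    · rintro _ ⟨x, rfl⟩
      simp only [hf]
      have := hP.posSemidef.dotProduct_mulVec_nonneg (x + w)
      simp only [star_trivial] at this
      linarith
  rw [hsup] at key
  have hval : w ⬝ᵥ P *ᵥ w = y ⬝ᵥ (M * P⁻¹ * M) *ᵥ y + y ⬝ᵥ (M * P⁻¹ * B) *ᵥ z
      + z ⬝ᵥ (Bᵀ * P⁻¹ * M) *ᵥ y + z ⬝ᵥ (Bᵀ * P⁻¹ * B) *ᵥ z := by
    rw [hPw, dotProduct_comm, hw]
    simp only [add_dotProduct, sw, hM.eq, mulVec_add, dotProduct_add, mulVec_mulVec, Matrix.mul_assoc]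
    ring
  simp only [fromBlocks_mulVec, sumElim_dotProduct_sumElim, Sum.elim_comp_inl, Sum.elim_comp_inr,
      sub_mulVec, neg_mulVec, dotProduct_add, dotProduct_sub, dotProduct_neg] at key ⊢
  linarith

theorem aux_gam {n : ℕ} (M A B C : Matrix (Fin n) (Fin n) ℝ) (hM : IsUnit M)
    (hP : (A - M).PosDef) :
    GamOp M (fromBlocks (-M - M * (A - M)⁻¹ * M) (-(M * (A - M)⁻¹ * B))
      (-(Bᵀ * (A - M)⁻¹ * M)) (C - Bᵀ * (A - M)⁻¹ * B)) = fromBlocks A B Bᵀ C := by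
  obtain ⟨P, hPdef⟩ : ∃ P, P = A - M := ⟨_, rfl⟩
  have hAe : A = M + P := by rw [hPdef]; abel
  rw [← hPdef] at hP ⊢
  have hPu : IsUnit P.det := (Matrix.isUnit_iff_isUnit_det _).1 hP.isUnit
  have hMu : IsUnit M.det := (Matrix.isUnit_iff_isUnit_det _).1 hM
  have a1 := Matrix.mul_nonsing_inv _ hPu
  have a2 := Matrix.nonsing_inv_mul _ hPu
  have b1 := Matrix.mul_nonsing_inv _ hMu
  have b2 := Matrix.nonsing_inv_mul _ hMu
  have c1 : ∀ X : Matrix (Fin n) (Fin n) ℝ, P * (P⁻¹ * X) = X := fun X => by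
    rw [← Matrix.mul_assoc, a1, Matrix.one_mul]
  have c2 : ∀ X : Matrix (Fin n) (Fin n) ℝ, P⁻¹ * (P * X) = X := fun X => by
    rw [← Matrix.mul_assoc, a2, Matrix.one_mul]
  have d1 : ∀ X : Matrix (Fin n) (Fin n) ℝ, M * (M⁻¹ * X) = X := fun X => by
    rw [← Matrix.mul_assoc, b1, Matrix.one_mul]
  have d2 : ∀ X : Matrix (Fin n) (Fin n) ℝ, M⁻¹ * (M * X) = X := fun X => by
    rw [← Matrix.mul_assoc, b2, Matrix.one_mul]
  have hinv : (M + (-M - M * P⁻¹ * M))⁻¹ = -(M⁻¹ * P * M⁻¹) := by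
    apply Matrix.inv_eq_right_inv
    have : M + (-M - M * P⁻¹ * M) = -(M * P⁻¹ * M) := by abel
    rw [this, neg_mul_neg]
    simp only [Matrix.mul_assoc, c1, c2, d1, d2, b1]
  unfold GamOp
  simp only [toBlocks_fromBlocks₁₁, toBlocks_fromBlocks₁₂, toBlocks_fromBlocks₂₁, toBlocks_fromBlocks₂₂, hinv]
  simp only [Matrix.mul_assoc, Matrix.neg_mul, Matrix.mul_neg, neg_neg, c1, c2, d1, d2, b1, b2, a1, a2,
    Matrix.mul_one]
  rw [hAe]
  congr 1 <;> abel

theorem aux_neg {n : ℕ} (M A B C : Matrix (Fin n) (Fin n) ℝ) (hP : (A - M).PosDef) :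
    GamOp M (-fromBlocks A B Bᵀ C) = -(fromBlocks (-M - M * (A - M)⁻¹ * M) (-(M * (A - M)⁻¹ * B))
      (-(Bᵀ * (A - M)⁻¹ * M)) (C - Bᵀ * (A - M)⁻¹ * B)) := by
  have hPu : IsUnit (A - M).det := (Matrix.isUnit_iff_isUnit_det _).1 hP.isUnit
  have hinv : (M + -A)⁻¹ = -(A - M)⁻¹ := by
    apply Matrix.inv_eq_right_inv
    have : M + -A = -(A - M) := by abel
    rw [this, neg_mul_neg, Matrix.mul_nonsing_inv _ hPu]
  unfold GamOp
  simp only [fromBlocks_neg, toBlocks_fromBlocks₁₁, toBlocks_fromBlocks₁₂, toBlocks_fromBlocks₂₁, toBlocks_fromBlocks₂₂, hinv]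
  simp only [Matrix.neg_mul, Matrix.mul_neg, neg_neg]
  congr 1 <;> abel

theorem aux_delt_delt {n : ℕ} (Ω : Matrix (Fin n ⊕ Fin n) (Fin n ⊕ Fin n) ℝ) :
    DeltOp (DeltOp Ω) = Ω := by
  simp [DeltOp, fromBlocks_toBlocks]

theorem aux_delt_neg {n : ℕ} (Ω : Matrix (Fin n ⊕ Fin n) (Fin n ⊕ Fin n) ℝ) :
    DeltOp (-Ω) = -DeltOp Ω := by
  rw [DeltOp, DeltOp, fromBlocks_neg]; rfl

theorem aux_delt_quad {n : ℕ} (Ω : Matrix (Fin n ⊕ Fin n) (Fin n ⊕ Fin n) ℝ) (x y : Fin n → ℝ) :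
    Sum.elim x y ⬝ᵥ DeltOp Ω *ᵥ Sum.elim x y = Sum.elim y x ⬝ᵥ Ω *ᵥ Sum.elim y x := by
  conv_rhs => rw [← fromBlocks_toBlocks Ω]
  simp only [DeltOp, fromBlocks_mulVec, sumElim_dotProduct_sumElim, Sum.elim_comp_inl,
    Sum.elim_comp_inr, dotProduct_add]
  ring

/-- Correspondence between the primal and dual space fundamental solution Hessians:
`Λ = Ξ(Θ)`; equivalently `Γ(Θ) = Π(Λ) = Q`. -/
theorem primal_dual_hessian_correspondence {n : ℕ}
    (M : Matrix (Fin n) (Fin n) ℝ) (hMsymm : M.IsSymm) (hMinv : IsUnit M)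
    (Q11 Q12 Q22 : Matrix (Fin n) (Fin n) ℝ)
    (hQ11symm : Q11.IsSymm) (hQ22symm : Q22.IsSymm)
    (hQ11M : (Q11 - M).PosDef) (hQ22M : (Q22 - M).PosDef)
    (Θ Λ : Matrix (Fin n ⊕ Fin n) (Fin n ⊕ Fin n) ℝ)
    (hΘsymm : Θ.IsSymm) (hΛsymm : Λ.IsSymm)
    (hΘ : ∀ y z : Fin n → ℝ,
      -(⨆ x : Fin n → ℝ,
          (1 / 2) * ((x - y) ⬝ᵥ M *ᵥ (x - y)) -
            (1 / 2) * (Sum.elim x z ⬝ᵥ fromBlocks Q11 Q12 Q12ᵀ Q22 *ᵥ Sum.elim x z)) =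
        (1 / 2) * (Sum.elim y z ⬝ᵥ Θ *ᵥ Sum.elim y z))
    (hΛ : ∀ x y : Fin n → ℝ,
      -(⨆ z : Fin n → ℝ,
          (1 / 2) * ((z - y) ⬝ᵥ M *ᵥ (z - y)) -
            (1 / 2) * (Sum.elim x z ⬝ᵥ fromBlocks Q11 Q12 Q12ᵀ Q22 *ᵥ Sum.elim x z)) =
        (1 / 2) * (Sum.elim x y ⬝ᵥ Λ *ᵥ Sum.elim x y)) :
    Λ = XiOp M Θ ∧
      GamOp M Θ = fromBlocks Q11 Q12 Q12ᵀ Q22 ∧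
      PiOp M Λ = fromBlocks Q11 Q12 Q12ᵀ Q22 := by
  have hT := aux_core M Q11 Q12 Q22 hMsymm hQ11symm hQ22symm hQ11M Θ hΘsymm hΘ
  have hG : GamOp M Θ = fromBlocks Q11 Q12 Q12ᵀ Q22 := by
    rw [hT]; exact aux_gam M Q11 Q12 Q22 hMinv hQ11M
  have hD : DeltOp (fromBlocks Q11 Q12 Q12ᵀ Q22) = fromBlocks Q22 Q12ᵀ Q12ᵀᵀ Q11 := by
    simp [DeltOp]
  have hDs : (DeltOp Λ).IsSymm := by
    have h := hΛsymm
    rw [← fromBlocks_toBlocks Λ, Matrix.isSymm_fromBlocks_iff] at h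
    obtain ⟨h1, h2, h3, h4⟩ := h
    exact Matrix.isSymm_fromBlocks_iff.2 ⟨h4, h3, h2, h1⟩
  have hL := aux_core M Q22 Q12ᵀ Q11 hMsymm hQ22symm hQ11symm hQ22M (DeltOp Λ) hDs (by
    intro y z
    rw [aux_delt_quad, ← hΛ z y, ← hD]
    simp only [aux_delt_quad])
  refine ⟨?_, hG, ?_⟩
  · rw [XiOp, hG, PiInvOp, PiOp, aux_delt_neg, hD, aux_neg _ _ _ _ hQ22M, ← hL, aux_delt_neg,
      aux_delt_delt, neg_neg]
  · rw [PiOp, hL, aux_gam _ _ _ _ hMinv hQ22M, ← hD, aux_delt_delt]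
end

section
/- Monotonicity and lower bound for the (2,2) block of the auxiliary Hessian sequence: Let M be a symmetric n×n real matrix satisfying: γ²·I − Bᵀ(R_k(M))B is positive definite for all k ≥ 0 and MB(γ²·I − BᵀMB)⁻¹BᵀM is positive definite. Define matrix sequences by Q_0¹¹ = M, Q_0¹² = −M, Q_0²¹ = −M, Q_0²² = M, and for k ≥ 0: Q_{k+1}¹¹ = R(Q_k¹¹), Q_{k+1}¹² = AᵀQ_k¹² + AᵀQ_k¹¹B(γ²·I − BᵀQ_k¹¹B)⁻¹BᵀQ_k¹², Q_{k+1}²¹ = (Q_{k+1}¹²)ᵀ, Q_{k+1}²² = Q_k²² + Q_k²¹B(γ²·I − BᵀQ_k¹¹B)⁻¹BᵀQ_k¹². Then Q_k¹¹ = R_k(M) for all k, Q_{k+1}²² ≥ Q_k²² in the Loewner order for all k ≥ 0, and Q_k²² − M is positive definite for all k ≥ 1. -/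
open Matrix

/-- Monotonicity and lower bound for the `(2,2)` block of the auxiliary Hessian
sequence `Q_k`. -/
theorem auxiliary_hessian_block22 {n m : ℕ}
    (A : Matrix (Fin n) (Fin n) ℝ) (B : Matrix (Fin n) (Fin m) ℝ)
    (Φ : Matrix (Fin n) (Fin n) ℝ) (hΦsymm : Φ.IsSymm) (hΦ : Φ.PosDef)
    (γ : ℝ) (hγ : 0 < γ)
    (M : Matrix (Fin n) (Fin n) ℝ) (hMsymm : M.IsSymm)
    (hM1 : ∀ k : ℕ,
      (γ ^ 2 • (1 : Matrix (Fin m) (Fin m) ℝ) - Bᵀ * ((Ric A B Φ γ)^[k] M) * B).PosDef)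
    (hM3 : (M * B * (γ ^ 2 • (1 : Matrix (Fin m) (Fin m) ℝ) - Bᵀ * M * B)⁻¹ * Bᵀ * M).PosDef)
    (Q11 Q12 Q21 Q22 : ℕ → Matrix (Fin n) (Fin n) ℝ)
    (hQ110 : Q11 0 = M) (hQ120 : Q12 0 = -M) (hQ210 : Q21 0 = -M) (hQ220 : Q22 0 = M)
    (hrec11 : ∀ k : ℕ, Q11 (k + 1) = Ric A B Φ γ (Q11 k))
    (hrec12 : ∀ k : ℕ, Q12 (k + 1) =
      Aᵀ * Q12 k +
        Aᵀ * Q11 k * B *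
          (γ ^ 2 • (1 : Matrix (Fin m) (Fin m) ℝ) - Bᵀ * Q11 k * B)⁻¹ * Bᵀ * Q12 k)
    (hrec21 : ∀ k : ℕ, Q21 (k + 1) = (Q12 (k + 1))ᵀ)
    (hrec22 : ∀ k : ℕ, Q22 (k + 1) =
      Q22 k +
        Q21 k * B *
          (γ ^ 2 • (1 : Matrix (Fin m) (Fin m) ℝ) - Bᵀ * Q11 k * B)⁻¹ * Bᵀ * Q12 k) :
    (∀ k : ℕ, Q11 k = (Ric A B Φ γ)^[k] M) ∧
      (∀ k : ℕ, (Q22 (k + 1) - Q22 k).PosSemidef) ∧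
      (∀ k : ℕ, 1 ≤ k → (Q22 k - M).PosDef) := by
  have h11 : ∀ k : ℕ, Q11 k = (Ric A B Φ γ)^[k] M := by
    intro k
    induction k with
    | zero => simpa using hQ110
    | succ k ih => rw [hrec11, ih, Function.iterate_succ_apply']
  have h21 : ∀ k : ℕ, Q21 k = (Q12 k)ᵀ := by
    intro k
    cases k with
    | zero => rw [hQ210, hQ120, transpose_neg, hMsymm.eq]
    | succ k => exact hrec21 k
  have hmono : ∀ k : ℕ, (Q22 (k + 1) - Q22 k).PosSemidef := by
    intro k
    have h := hM1 k
    rw [← h11 k] at h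
    have h2 := h.inv.posSemidef.conjTranspose_mul_mul_same (Bᵀ * Q12 k)
    rw [hrec22, add_sub_cancel_left, h21]
    simpa [conjTranspose_eq_transpose_of_trivial, Matrix.mul_assoc] using h2
  refine ⟨h11, hmono, ?_⟩
  intro k hk
  induction k, hk using Nat.le_induction with
  | base =>
    have e : Q22 1 - M
        = M * B * (γ ^ 2 • (1 : Matrix (Fin m) (Fin m) ℝ) - Bᵀ * M * B)⁻¹ * Bᵀ * M := by
      have := hrec22 0
      rw [zero_add] at this
      rw [this, hQ220, add_sub_cancel_left, hQ110, hQ120, hQ210]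
      simp only [Matrix.neg_mul, Matrix.mul_neg, neg_neg]
    rw [e]
    exact hM3
  | succ k hk ih =>
    have e : Q22 (k + 1) - M = (Q22 k - M) + (Q22 (k + 1) - Q22 k) := by abel
    rw [e]
    exact ih.add_posSemidef (hmono k)
end

section
/- Γ⁻¹ inverts Γ: Let M be a symmetric invertible n×n real matrix and let Ω be a symmetric 2n×2n real matrix with n×n blocks Ω¹¹, Ω¹², Ω²¹ = (Ω¹²)ᵀ, Ω²² such that M + Ω¹¹ is invertible. Then M − (Γ(Ω))¹¹ = M(M+Ω¹¹)⁻¹M is invertible and Γ⁻¹(Γ(Ω)) = Ω, where Γ⁻¹ is given blockwise for a matrix Ψ with M − Ψ¹¹ invertible by (Γ⁻¹(Ψ))¹¹ = M(M−Ψ¹¹)⁻¹M − M, (Γ⁻¹(Ψ))¹² = M(M−Ψ¹¹)⁻¹Ψ¹², (Γ⁻¹(Ψ))²¹ = Ψ²¹(M−Ψ¹¹)⁻¹M, (Γ⁻¹(Ψ))²² = Ψ²¹(M−Ψ¹¹)⁻¹Ψ¹² + Ψ²². -/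
open Matrix

/-- The operation `Γ⁻¹`, given blockwise for `Ψ` with `M − Ψ¹¹` invertible by
`M(M−Ψ¹¹)⁻¹M − M`, `M(M−Ψ¹¹)⁻¹Ψ¹²`, `Ψ²¹(M−Ψ¹¹)⁻¹M`, `Ψ²¹(M−Ψ¹¹)⁻¹Ψ¹² + Ψ²²`. -/
noncomputable def GamInvOp {n : ℕ} (M : Matrix (Fin n) (Fin n) ℝ)
    (Ψ : Matrix (Fin n ⊕ Fin n) (Fin n ⊕ Fin n) ℝ) :
    Matrix (Fin n ⊕ Fin n) (Fin n ⊕ Fin n) ℝ :=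
  fromBlocks
    (M * (M - Ψ.toBlocks₁₁)⁻¹ * M - M)
    (M * (M - Ψ.toBlocks₁₁)⁻¹ * Ψ.toBlocks₁₂)
    (Ψ.toBlocks₂₁ * (M - Ψ.toBlocks₁₁)⁻¹ * M)
    (Ψ.toBlocks₂₁ * (M - Ψ.toBlocks₁₁)⁻¹ * Ψ.toBlocks₁₂ + Ψ.toBlocks₂₂)

/-- `Γ⁻¹` inverts `Γ`: for `M` symmetric invertible and `M + Ω¹¹` invertible,
`M − (Γ(Ω))¹¹ = M(M+Ω¹¹)⁻¹M` is invertible and `Γ⁻¹(Γ(Ω)) = Ω`. -/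
theorem gamma_inv_gamma {n : ℕ}
    (M : Matrix (Fin n) (Fin n) ℝ) (hMsymm : M.IsSymm) (hMinv : IsUnit M)
    (Ω : Matrix (Fin n ⊕ Fin n) (Fin n ⊕ Fin n) ℝ)
    (hΩsymm : Ω.IsSymm) (hΩ21 : Ω.toBlocks₂₁ = (Ω.toBlocks₁₂)ᵀ)
    (hinv : IsUnit (M + Ω.toBlocks₁₁)) :
    M - (GamOp M Ω).toBlocks₁₁ = M * (M + Ω.toBlocks₁₁)⁻¹ * M ∧
      IsUnit (M - (GamOp M Ω).toBlocks₁₁) ∧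
      GamInvOp M (GamOp M Ω) = Ω := by
  have h1 : M - (GamOp M Ω).toBlocks₁₁ = M * (M + Ω.toBlocks₁₁)⁻¹ * M := by
    simp [GamOp]
  have hMd : IsUnit M.det := (Matrix.isUnit_iff_isUnit_det _).1 hMinv
  have hPd : IsUnit (M + Ω.toBlocks₁₁).det := (Matrix.isUnit_iff_isUnit_det _).1 hinv
  have hPi : IsUnit (M + Ω.toBlocks₁₁)⁻¹ := (Matrix.isUnit_nonsing_inv_iff).2 hinv
  refine ⟨h1, h1 ▸ (hMinv.mul hPi).mul hMinv, ?_⟩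
  have hK : (M - (GamOp M Ω).toBlocks₁₁)⁻¹ = M⁻¹ * ((M + Ω.toBlocks₁₁) * M⁻¹) := by
    rw [h1, Matrix.mul_inv_rev, Matrix.mul_inv_rev, Matrix.nonsing_inv_nonsing_inv _ hPd]
  have e1 : ∀ X : Matrix (Fin n) (Fin n) ℝ, M * (M⁻¹ * X) = X :=
    fun X => Matrix.mul_nonsing_inv_cancel_left _ _ hMd
  have e2 : ∀ X : Matrix (Fin n) (Fin n) ℝ, M⁻¹ * (M * X) = X :=
    fun X => Matrix.nonsing_inv_mul_cancel_left _ _ hMd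
  unfold GamInvOp
  rw [hK]
  conv_rhs => rw [← Matrix.fromBlocks_toBlocks Ω]
  simp only [GamOp, Matrix.toBlocks_fromBlocks₁₂, Matrix.toBlocks_fromBlocks₂₁,
    Matrix.toBlocks_fromBlocks₂₂]
  generalize Ω.toBlocks₁₁ = A at *
  have e3 : ∀ X : Matrix (Fin n) (Fin n) ℝ, (M + A) * ((M + A)⁻¹ * X) = X :=
    fun X => Matrix.mul_nonsing_inv_cancel_left _ _ hPd
  have e4 : ∀ X : Matrix (Fin n) (Fin n) ℝ, (M + A)⁻¹ * ((M + A) * X) = X :=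
    fun X => Matrix.nonsing_inv_mul_cancel_left _ _ hPd
  congr 1
  all_goals simp only [Matrix.mul_assoc, e1, e2, e3, e4, Matrix.nonsing_inv_mul _ hMd,
    Matrix.mul_one]
  all_goals abel
end
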